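/- arXiv:0910.3417 — 6 statements merged into one kernel-verified Lean document; each statement's English description precedes it below -/
import Mathlib

section
/- Let q be a prime power with q ≡ 3 (mod 4), let n be a positive integer, and let k be an odd divisor of n. Set T_k = Σ_{i=0}^{n/k−1} t^{q^{ki}} ∈ 𝔽_q[t], F_k = T_k^{(q^k−1)/2} and G_k = T_k^{(q^k−3)/4} (note q^k ≡ 3 (mod 4), so (q^k−3)/4 is an integer). Then (t^{q^n}−t)·G_k² = F_k³ − F_k in 𝔽_q[t], the formal derivative F_k′ is nonzero, and deg F_k = (q^n − q^{n−k})/2, so that for distinct odd divisors k ≠ k′ of n the separable ∞-integral points Q_k = (F_k, G_k) and Q_{k′} = (F_{k′}, G_{k′}) of the quadratic twist (t^{q^n}−t)y² = x³ − x are distinct. -/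
open Polynomial

/-- The trace polynomial `T_k = Σ_{i=0}^{n/k-1} t^(q^(k*i))` over `𝔽_q`. -/
noncomputable def tracePoly (Fq : Type*) [Field Fq] [Fintype Fq] (n k : ℕ) : Polynomial Fq :=
  ∑ i ∈ Finset.range (n / k), X ^ (Fintype.card Fq) ^ (k * i)

/-- `F_k = T_k ^ ((q^k - 1)/2)`. -/
noncomputable def Fquad (Fq : Type*) [Field Fq] [Fintype Fq] (n k : ℕ) : Polynomial Fq :=
  tracePoly Fq n k ^ ((Fintype.card Fq ^ k - 1) / 2)

/-- `G_k = T_k ^ ((q^k - 3)/4)`. -/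
noncomputable def Gquad (Fq : Type*) [Field Fq] [Fintype Fq] (n k : ℕ) : Polynomial Fq :=
  tracePoly Fq n k ^ ((Fintype.card Fq ^ k - 3) / 4)

/-!
Raising `T_k` to the power `q ^ k` is additive, so it shifts the summands of `T_k` by one index and
`T_k ^ q ^ k - T_k` telescopes to `t ^ q ^ n - t`. As `q ^ k ≡ 3 (mod 4)`, this makes `(F_k, G_k)`
the point obtained by putting `x = T_k`, `m = q ^ k` in the identity
`(x ^ m - x) * (x ^ ((m - 3) / 4)) ^ 2 = (x ^ ((m - 1) / 2)) ^ 3 - x ^ ((m - 1) / 2)`.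
Moreover `T_k` has derivative `1` and degree `q ^ (n - k)`; the latter shows that `deg F_k`
determines `k`.
-/

lemma pow_mod_four_eq_three {q k : ℕ} (hq : q % 4 = 3) (hk : Odd k) : q ^ k % 4 = 3 := by
  obtain ⟨j, rfl⟩ := hk
  rw [Nat.pow_mod, hq, pow_succ, pow_mul, Nat.mul_mod, Nat.pow_mod]
  norm_num

lemma pow_sub_self_mul_pow_sq {R : Type*} [CommRing R] (x : R) {m : ℕ} (hm : m % 4 = 3) :
    (x ^ m - x) * (x ^ ((m - 3) / 4)) ^ 2 = (x ^ ((m - 1) / 2)) ^ 3 - x ^ ((m - 1) / 2) := by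
  obtain ⟨j, rfl⟩ : ∃ j, m = 4 * j + 3 := ⟨m / 4, by omega⟩
  have hG : (4 * j + 3 - 3) / 4 = j := by omega
  have hF : (4 * j + 3 - 1) / 2 = 2 * j + 1 := by omega
  rw [hG, hF]
  ring

lemma natCast_sub_one_div_two_ne_zero {R : Type*} [NonAssocSemiring R] [Nontrivial R] {m : ℕ}
    (hm : Odd m) (hm0 : (m : R) = 0) : (((m - 1) / 2 : ℕ) : R) ≠ 0 := by
  obtain ⟨j, rfl⟩ := hm
  rw [Nat.add_sub_cancel, Nat.mul_div_cancel_left j two_pos]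
  intro hj
  simp [hj] at hm0

lemma sum_pow_card_pow (K : Type*) [Field K] [Fintype K] {R ι : Type*} [CommRing R] [Algebra K R]
    (s : Finset ι) (f : ι → R) (k : ℕ) :
    (∑ i ∈ s, f i) ^ Fintype.card K ^ k = ∑ i ∈ s, f i ^ Fintype.card K ^ k := by
  simpa only [AlgHom.coe_pow, FiniteField.coe_frobeniusAlgHom, pow_iterate] using
    map_sum (FiniteField.frobeniusAlgHom K R ^ k) f s

lemma sum_pow_card_pow_mul_pow_sub (K : Type*) [Field K] [Fintype K] {R : Type*} [CommRing R]
    [Algebra K R] (x : R) (k m : ℕ) :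
    (∑ i ∈ Finset.range m, x ^ Fintype.card K ^ (k * i)) ^ Fintype.card K ^ k
        - ∑ i ∈ Finset.range m, x ^ Fintype.card K ^ (k * i)
      = x ^ Fintype.card K ^ (k * m) - x := by
  have hshift (i : ℕ) : (x ^ Fintype.card K ^ (k * i)) ^ Fintype.card K ^ k
      = x ^ Fintype.card K ^ (k * (i + 1)) := by
    rw [← pow_mul, ← pow_add, mul_add_one]
  simp only [sum_pow_card_pow, hshift]
  rw [← Finset.sum_sub_distrib, Finset.sum_range_sub fun i ↦ x ^ Fintype.card K ^ (k * i),
    mul_zero, pow_zero, pow_one]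

lemma natDegree_sum_range_X_pow {R : Type*} [Semiring R] [Nontrivial R] {e : ℕ → ℕ}
    (he : StrictMono e) (m : ℕ) :
    (∑ i ∈ Finset.range (m + 1), (X : R[X]) ^ e i).natDegree = e m := by
  induction m with
  | zero => simp
  | succ m ih =>
    rw [Finset.sum_range_succ, natDegree_add_eq_right_of_natDegree_lt, natDegree_X_pow]
    rw [ih, natDegree_X_pow]
    exact he m.lt_succ_self

lemma derivative_sum_range_X_pow_pow {R : Type*} [Semiring R] {Q : ℕ} (hQ : (Q : R) = 0) (m : ℕ) :
    derivative (∑ i ∈ Finset.range (m + 1), (X : R[X]) ^ Q ^ i) = 1 := by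
  simp [Finset.sum_range_succ', derivative_X_pow, hQ]

lemma derivative_pow_ne_zero {R : Type*} [CommSemiring R] [NoZeroDivisors R] {f : R[X]}
    (hf : derivative f ≠ 0) {m : ℕ} (hm : (m : R) ≠ 0) : derivative (f ^ m) ≠ 0 := by
  have hf0 : f ≠ 0 := by
    rintro rfl
    exact hf derivative_zero
  rw [derivative_pow]
  exact mul_ne_zero (mul_ne_zero (C_ne_zero.mpr hm) (pow_ne_zero _ hf0)) hf

section TracePoly

variable {Fq : Type*} [Field Fq] [Fintype Fq] {n k : ℕ}

lemma tracePoly_pow_sub (hkn : k ∣ n) :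
    tracePoly Fq n k ^ Fintype.card Fq ^ k - tracePoly Fq n k = X ^ Fintype.card Fq ^ n - X := by
  rw [tracePoly, sum_pow_card_pow_mul_pow_sub, Nat.mul_div_cancel' hkn]

lemma derivative_tracePoly (hn : 0 < n) (hkn : k ∣ n) : derivative (tracePoly Fq n k) = 1 := by
  have hk := Nat.pos_of_dvd_of_pos hkn hn
  have hcard : ((Fintype.card Fq ^ k : ℕ) : Fq) = 0 := by simp [hk.ne']
  obtain ⟨m, hm⟩ := Nat.exists_eq_add_one.mpr (Nat.div_pos (Nat.le_of_dvd hn hkn) hk)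
  simp only [tracePoly, hm, pow_mul]
  exact derivative_sum_range_X_pow_pow hcard m

lemma natDegree_tracePoly (hn : 0 < n) (hkn : k ∣ n) :
    (tracePoly Fq n k).natDegree = Fintype.card Fq ^ (n - k) := by
  have hk := Nat.pos_of_dvd_of_pos hkn hn
  have hexp : StrictMono fun i ↦ Fintype.card Fq ^ (k * i) := fun i j hij ↦
    Nat.pow_lt_pow_right Fintype.one_lt_card (Nat.mul_lt_mul_of_pos_left hij hk)
  obtain ⟨m, hm⟩ := Nat.exists_eq_add_one.mpr (Nat.div_pos (Nat.le_of_dvd hn hkn) hk)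
  have hmn : k * m = n - k := by
    rw [← Nat.mul_div_cancel' hkn, hm, mul_add_one, Nat.add_sub_cancel]
  rw [tracePoly, hm, natDegree_sum_range_X_pow hexp, hmn]

lemma sub_mul_Gquad_sq (hq : Fintype.card Fq % 4 = 3) (hkn : k ∣ n) (hk : Odd k) :
    (X ^ Fintype.card Fq ^ n - X) * Gquad Fq n k ^ 2 = Fquad Fq n k ^ 3 - Fquad Fq n k := by
  rw [← tracePoly_pow_sub hkn]
  exact pow_sub_self_mul_pow_sq _ (pow_mod_four_eq_three hq hk)

lemma derivative_Fquad_ne_zero (hq : Odd (Fintype.card Fq)) (hn : 0 < n) (hkn : k ∣ n) :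
    derivative (Fquad Fq n k) ≠ 0 := by
  have hk := Nat.pos_of_dvd_of_pos hkn hn
  have hT : derivative (tracePoly Fq n k) ≠ 0 := by
    rw [derivative_tracePoly hn hkn]
    exact one_ne_zero
  exact derivative_pow_ne_zero hT
    (natCast_sub_one_div_two_ne_zero hq.pow (by simp [hk.ne']))

lemma two_mul_natDegree_Fquad_add (hq : Odd (Fintype.card Fq)) (hn : 0 < n) (hkn : k ∣ n) :
    2 * (Fquad Fq n k).natDegree + Fintype.card Fq ^ (n - k) = Fintype.card Fq ^ n := by
  have hhalf : 2 * ((Fintype.card Fq ^ k - 1) / 2) + 1 = Fintype.card Fq ^ k := by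
    have := Nat.odd_iff.mp (hq.pow (n := k))
    omega
  rw [Fquad, natDegree_pow, natDegree_tracePoly hn hkn, ← mul_assoc, ← add_one_mul, hhalf,
    ← pow_add, Nat.add_sub_cancel' (Nat.le_of_dvd hn hkn)]

lemma natDegree_Fquad (hq : Odd (Fintype.card Fq)) (hn : 0 < n) (hkn : k ∣ n) :
    (Fquad Fq n k).natDegree = (Fintype.card Fq ^ n - Fintype.card Fq ^ (n - k)) / 2 := by
  have := two_mul_natDegree_Fquad_add hq hn hkn
  omega

lemma injOn_Fquad (hq : Odd (Fintype.card Fq)) (hn : 0 < n) :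
    Set.InjOn (Fquad Fq n) {k | k ∣ n} := by
  intro k hkn k' hkn' h
  have hdeg := two_mul_natDegree_Fquad_add hq hn hkn
  rw [h, ← two_mul_natDegree_Fquad_add hq hn hkn', add_right_inj] at hdeg
  have hsub : n - k = n - k' := Nat.pow_right_injective Fintype.one_lt_card hdeg
  exact (tsub_right_inj (Nat.le_of_dvd hn hkn) (Nat.le_of_dvd hn hkn')).mp hsub

end TracePoly

theorem stmt0 (Fq : Type*) [Field Fq] [Fintype Fq]
    (hq : Fintype.card Fq % 4 = 3) (n : ℕ) (hn : 0 < n) :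
    (∀ k, k ∣ n → Odd k →
      (X ^ (Fintype.card Fq ^ n) - X) * Gquad Fq n k ^ 2
          = Fquad Fq n k ^ 3 - Fquad Fq n k ∧
        derivative (Fquad Fq n k) ≠ 0 ∧
        (Fquad Fq n k).natDegree
          = (Fintype.card Fq ^ n - Fintype.card Fq ^ (n - k)) / 2) ∧
    (∀ k k', k ∣ n → k' ∣ n → Odd k → Odd k' → k ≠ k' →
      (Fquad Fq n k, Gquad Fq n k) ≠ (Fquad Fq n k', Gquad Fq n k')) := by
  have hodd : Odd (Fintype.card Fq) := Nat.odd_iff.mpr (Nat.odd_of_mod_four_eq_three hq)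
  refine ⟨fun k hkn hk ↦ ⟨sub_mul_Gquad_sq hq hkn hk, derivative_Fquad_ne_zero hodd hn hkn,
    natDegree_Fquad hodd hn hkn⟩, fun k k' hkn hkn' _ _ hne h ↦ hne ?_⟩
  exact injOn_Fquad hodd hn hkn hkn' (congrArg Prod.fst h)
end

section
/- Let q be an odd prime power, let f ∈ 𝔽_q[x] be a squarefree polynomial of degree 3, and let A ∈ 𝔽_q[t] be a squarefree polynomial of odd degree d > 1. Suppose F, G ∈ 𝔽_q[t] satisfy A·G² = f(F) and F′ ≠ 0. Then G divides F′ in 𝔽_q[t], and d ≤ 3·deg F and deg F ≤ d − 2 (i.e., d/3 ≤ deg F < d − 1). -/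
open Polynomial

/-!
Since `f` and `f′` are coprime, so are `f(F)` and `f′(F)`. If `G ^ (k + 1)` divides `f(F)`, then
`G ^ k` divides both `f(F)` and its derivative `f′(F) * F′`, hence it divides `F′`. When `F′ ≠ 0`
this forces `k * deg G < deg F`, and comparing degrees in `A * G ^ (k + 1) = f(F)` turns this upper
bound on `deg G` into a lower bound on `deg A`.
-/

section

variable {R : Type*} [CommSemiring R] {f F G : R[X]} {k : ℕ}

theorem isCoprime_comp_derivative_comp (hf : f.Separable) (F : R[X]) :
    IsCoprime (f.comp F) ((derivative f).comp F) := by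
  simpa only [coe_compRingHom_apply] using IsCoprime.map hf (compRingHom F)

theorem pow_dvd_derivative_of_pow_succ_dvd_comp (hf : f.Separable)
    (hG : G ^ (k + 1) ∣ f.comp F) : G ^ k ∣ derivative F := by
  have hcop : IsCoprime (G ^ k) ((derivative f).comp F) :=
    (isCoprime_comp_derivative_comp hf F).of_isCoprime_of_dvd_left
      ((pow_dvd_pow G k.le_succ).trans hG)
  have hdvd : G ^ k ∣ derivative F * (derivative f).comp F := by
    simpa only [add_tsub_cancel_right, derivative_comp]
      using pow_sub_one_dvd_derivative_of_pow_dvd hG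
  exact hcop.dvd_of_dvd_mul_right hdvd

theorem mul_natDegree_lt_of_pow_dvd_derivative [NoZeroDivisors R] (hF : derivative F ≠ 0)
    (hG : G ^ k ∣ derivative F) : k * G.natDegree < F.natDegree := by
  have hF₀ : F.natDegree ≠ 0 := fun h => hF (derivative_of_natDegree_zero h)
  calc
    k * G.natDegree = (G ^ k).natDegree := (natDegree_pow G k).symm
    _ ≤ (derivative F).natDegree := natDegree_le_of_dvd hG hF
    _ < F.natDegree := natDegree_derivative_lt hF₀

theorem natDegree_add_mul_natDegree_of_mul_pow_eq_comp [NoZeroDivisors R] {A : R[X]} {m : ℕ}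
    (hf : f ≠ 0) (hF : F.natDegree ≠ 0) (h : A * G ^ m = f.comp F) :
    A.natDegree + m * G.natDegree = f.natDegree * F.natDegree := by
  have hcomp : f.comp F ≠ 0 := fun h₀ =>
    (comp_eq_zero_iff.mp h₀).elim hf fun hC => hF (by rw [hC.2, natDegree_C])
  have hAG : A * G ^ m ≠ 0 := h ▸ hcomp
  rw [← natDegree_comp, ← h, natDegree_mul (left_ne_zero_of_mul hAG) (right_ne_zero_of_mul hAG),
    natDegree_pow]

/-- The last bound is `k * (deg f * deg F - deg A) ≤ (k + 1) * (deg F - 1)`, rearranged to avoid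
truncated subtraction. -/
theorem stmt4_general [IsDomain R] {A : R[X]} (hf : f.Separable)
    (h : A * G ^ (k + 1) = f.comp F) (hF : derivative F ≠ 0) :
    G ^ k ∣ derivative F ∧ A.natDegree ≤ f.natDegree * F.natDegree ∧
      k * (f.natDegree * F.natDegree) + (k + 1) ≤ k * A.natDegree + (k + 1) * F.natDegree := by
  have hdvd : G ^ k ∣ derivative F :=
    pow_dvd_derivative_of_pow_succ_dvd_comp hf (h ▸ dvd_mul_left _ A)
  have hlt : k * G.natDegree < F.natDegree := mul_natDegree_lt_of_pow_dvd_derivative hF hdvd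
  have hdeg : A.natDegree + (k + 1) * G.natDegree = f.natDegree * F.natDegree :=
    natDegree_add_mul_natDegree_of_mul_pow_eq_comp hf.ne_zero (Nat.ne_zero_of_lt hlt) h
  refine ⟨hdvd, hdeg ▸ Nat.le_add_right _ _, ?_⟩
  calc
    k * (f.natDegree * F.natDegree) + (k + 1)
        = k * A.natDegree + (k + 1) * (k * G.natDegree + 1) := by rw [← hdeg]; ring
    _ ≤ k * A.natDegree + (k + 1) * F.natDegree := by gcongr; exact hlt

end

theorem stmt4 (Fq : Type*) [Field Fq] [Fintype Fq] (hq : Odd (Fintype.card Fq))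
    (f : Polynomial Fq) (hf : Squarefree f) (hf3 : f.natDegree = 3)
    (A : Polynomial Fq) (hA : Squarefree A) (hAodd : Odd A.natDegree)
    (hAd : 1 < A.natDegree)
    (F G : Polynomial Fq) (hpt : A * G ^ 2 = f.comp F) (hsep : derivative F ≠ 0) :
    G ∣ derivative F ∧ A.natDegree ≤ 3 * F.natDegree ∧
      F.natDegree ≤ A.natDegree - 2 := by
  obtain ⟨hdvd, hle, hge⟩ :=
    stmt4_general (k := 1) (PerfectField.separable_iff_squarefree.mpr hf) hpt hsep
  exact ⟨pow_one G ▸ hdvd, hf3 ▸ hle, by rw [hf3] at hge; omega⟩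
end

section
/- Let p be an odd prime, q = p^l a power of p, and n a positive integer. Let f ∈ 𝔽_{q^n}[x] be a monic squarefree polynomial of degree 3. Then the following are equivalent: (i) there exist F, G ∈ 𝔽_{q^n}[t] with (t^{q^n} − t)·G² = f(F), F′ ≠ 0, and 2·deg F ≤ q^n − 1; (ii) p ≡ 3 (mod 4) and there exist r ∈ 𝔽_{q^n} and a ∈ 𝔽_{q^n}^× such that f(x + r) = x³ − a²·x (equivalently, the elliptic curve y² = f(x) is isomorphic over 𝔽_{q^n} to a·y² = x³ − x for some a ∈ 𝔽_{q^n}). -/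
open Polynomial

/-!
Let `q` be the order of the base field. A point `(F, G)` maps all `q` elements of the field to roots
of `f`, and `2 deg F < q` then forces `f` to have three roots in the field. Differentiating
`(X ^ q - X) * G ^ 2 = f(F)` gives `F' = G * H` and `G + f'(e) * H = 0` at every element of the
fibre of `F` over a root `e`. The fibres partition the field, so at least two of them are too large
for this to hold without `G + f'(e) * H` vanishing identically. Hence `f'` agrees at two roots,
which puts the third one in the middle between them, that is, `f` is a translate of
`X ^ 3 - a ^ 2 * X` with `2 * a ≠ 0`.

The point is also a map from the curve `s ^ 2 = t ^ q - t` to `y ^ 2 = f x`, and it pulls `dx / y`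
back to `H dt / s`. The Cartier operator kills the regular differentials of the first curve and
commutes with pullback, so the Hasse invariant of `f` vanishes; for `X ^ 3 - a ^ 2 * X` it is a
central binomial coefficient up to a unit when `p ≡ 1 mod 4`, and it is then nonzero by Lucas.

Conversely, if `p ≡ 3 mod 4`, a solution `S` of `S ^ p - S = a⁻¹ * (X ^ q - X)` gives the point with
`F = a * S ^ ((p - 1) / 2)`.
-/

section Cartier

section CommSemiring

variable {R : Type*} [CommSemiring R]

/-- The Cartier operator `P dt ↦ (∑ⱼ P_{q(j+1)-1} tʲ) dt` on differential forms of the affine line,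
written on coefficients and without extraction of `q`-th roots, so that it is linear over the
constants. It is meant for `q ≠ 0`. -/
noncomputable def cartier (q : ℕ) [NeZero q] : R[X] →ₗ[R] R[X] where
  toFun P := divX (contract q (X * P))
  map_add' P S := by rw [mul_add, contract_add (NeZero.ne q), divX_add]
  map_smul' a P := by
    ext
    simp [coeff_divX, coeff_contract (NeZero.ne q)]

variable (q : ℕ) [NeZero q]

theorem coeff_cartier (P : R[X]) (j : ℕ) :
    (cartier q P).coeff j = P.coeff (q * (j + 1) - 1) := by
  have hpos : 0 < q * (j + 1) := Nat.mul_pos (NeZero.pos q) j.succ_pos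
  rw [cartier, LinearMap.coe_mk, AddHom.coe_mk, coeff_divX, coeff_contract (NeZero.ne q),
    mul_comm _ q, ← Nat.sub_add_cancel hpos, coeff_X_mul, Nat.add_sub_cancel]

theorem X_mul_cartier (P : R[X]) : X * cartier q P = contract q (X * P) := by
  have h := X_mul_divX_add (contract q (X * P))
  rwa [coeff_contract (NeZero.ne q), zero_mul, coeff_X_mul_zero, C_0, add_zero] at h

theorem cartier_mul_expand (P A : R[X]) :
    cartier q (P * expand R q A) = cartier q P * A := by
  apply isRegular_X.left
  simp only
  rw [X_mul_cartier, ← mul_assoc, contract_mul_expand (NeZero.ne q), ← X_mul_cartier, mul_assoc]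

variable {q}

theorem cartier_eq_zero_of_natDegree_lt {P : R[X]} (hP : P.natDegree + 1 < q) :
    cartier q P = 0 := by
  ext j
  rw [coeff_cartier, coeff_zero]
  have hq : q ≤ q * (j + 1) := Nat.le_mul_of_pos_right q j.succ_pos
  exact coeff_eq_zero_of_natDegree_lt (by omega)

end CommSemiring

section CommRing

variable {R : Type*} [CommRing R] {q : ℕ} [NeZero q]

theorem cartier_X_pow_sub_X_pow_mul {M : ℕ} {P : R[X]} (hP : M + P.natDegree + 1 < q) :
    cartier q ((X ^ q - X) ^ M * P) = 0 := by
  induction M generalizing P with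
  | zero => rw [pow_zero, one_mul, cartier_eq_zero_of_natDegree_lt (by omega)]
  | succ M ih =>
    have hXP : (X * P).natDegree ≤ 1 + P.natDegree :=
      natDegree_mul_le.trans (Nat.add_le_add_right natDegree_X_le _)
    have hsplit : (X ^ q - X) ^ (M + 1) * P =
        (X ^ q - X) ^ M * P * expand R q X - (X ^ q - X) ^ M * (X * P) := by
      rw [expand_X]
      ring
    rw [hsplit, map_sub, cartier_mul_expand, ih (by omega), ih (by omega), zero_mul, sub_zero]

theorem mul_coeff_pow_mul_derivative (F : R[X]) {i n d u v : ℕ} (hi : i + 1 = d * u)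
    (hn : n + 1 = d * v) :
    (u : R) * (F ^ i * derivative F).coeff n = v * (F ^ (i + 1)).coeff (n + 1) := by
  -- The identity times `d` is the derivative of a power; `d` can be cancelled after lifting `F` to
  -- coefficients in a polynomial ring over `ℤ`.
  have hd : (d : MvPolynomial R ℤ) ≠ 0 :=
    Nat.cast_ne_zero.2 (left_ne_zero_of_mul (hi.symm.trans_ne i.succ_ne_zero))
  let φ := MvPolynomial.eval₂Hom (Int.castRingHom R) id
  have hφ : Function.Surjective φ := fun x => ⟨MvPolynomial.X x, by simp [φ]⟩
  obtain ⟨F, rfl⟩ := map_surjective φ hφ F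
  have hlift : (u : MvPolynomial R ℤ) * (F ^ i * derivative F).coeff n =
      v * (F ^ (i + 1)).coeff (n + 1) := by
    have h := coeff_derivative (F ^ (i + 1)) n
    rw [derivative_pow_succ, mul_assoc, coeff_C_mul] at h
    norm_cast at h
    rw [hi, hn] at h ⊢
    push_cast at h
    exact mul_left_cancel₀ hd (by linear_combination h)
  simpa only [map_mul, map_natCast, ← coeff_map, Polynomial.map_mul, Polynomial.map_pow,
    derivative_map] using congrArg φ hlift

theorem cartier_pow_mul_derivative_eq_zero {p m : ℕ} [NeZero (p ^ m)] [Fact p.Prime] [CharP R p]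
    (F : R[X]) {i : ℕ} (hi : ¬ p ^ m ∣ i + 1) :
    cartier (p ^ m) (F ^ i * derivative F) = 0 := by
  obtain ⟨a, u, hu, hau⟩ :=
    Nat.exists_eq_pow_mul_and_not_dvd i.succ_ne_zero p (Fact.out : p.Prime).ne_one
  have ham : a < m := by
    by_contra! h
    exact hi (((pow_dvd_pow p h).mul_right u).trans (dvd_of_eq hau.symm))
  obtain ⟨e, rfl⟩ := Nat.exists_eq_add_of_lt ham
  ext j
  have hn : p ^ (a + e + 1) * (j + 1) - 1 + 1 = p ^ a * (p * (p ^ e * (j + 1))) := by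
    rw [Nat.sub_add_cancel (Nat.mul_pos (NeZero.pos _) j.succ_pos), Nat.succ_eq_add_one]
    ring
  have h := mul_coeff_pow_mul_derivative F hau hn
  rw [Nat.cast_mul p, CharP.cast_eq_zero R p, zero_mul, zero_mul] at h
  rw [coeff_cartier, coeff_zero]
  exact ((CharP.isUnit_natCast_iff Fact.out).2 hu).mul_right_eq_zero.1 h

end CommRing

variable {k : Type*} [Field k] [Fintype k]

local notation "q" => Fintype.card k

theorem cartier_pow_card_sub_one_mul_derivative (F : k[X]) :
    cartier q (F ^ (q - 1) * derivative F) = derivative F := by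
  ext j
  have hn : q * (j + 1) - 1 + 1 = q * (j + 1) :=
    Nat.sub_add_cancel (Nat.mul_pos Fintype.card_pos j.succ_pos)
  have hi : q - 1 + 1 = q := Nat.sub_add_cancel Fintype.card_pos
  have h := mul_coeff_pow_mul_derivative F (hi.trans (mul_one _).symm) hn
  rw [hn, hi, ← FiniteField.expand_card, mul_comm q (j + 1), coeff_expand_mul Fintype.card_pos,
    mul_comm (j + 1), Nat.cast_one, one_mul] at h
  rw [coeff_cartier, h, coeff_derivative, mul_comm, Nat.cast_succ]

theorem cartier_comp_mul_derivative (g F : k[X]) :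
    cartier q (g.comp F * derivative F) = (cartier q g).comp F * derivative F := by
  obtain ⟨p, hchar⟩ := CharP.exists k
  obtain ⟨m, hp, hm⟩ := FiniteField.card k p
  have : Fact p.Prime := ⟨hp⟩
  have hvanish {i : ℕ} (hi : ¬ q ∣ i + 1) (P : k[X]) : cartier q (P ^ i * derivative P) = 0 := by
    simp only [hm] at hi ⊢
    exact cartier_pow_mul_derivative_eq_zero P hi
  have hsurvive {i b : ℕ} (hi : i + 1 = q * (b + 1)) (P : k[X]) :
      cartier q (P ^ i * derivative P) = derivative P * P ^ b := by
    have hq : 0 < q := Fintype.card_pos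
    have hib : i = q - 1 + b * q := by
      rw [mul_add_one, mul_comm q b] at hi
      omega
    rw [hib, pow_add, pow_mul, ← FiniteField.expand_card, mul_right_comm, cartier_mul_expand,
      cartier_pow_card_sub_one_mul_derivative]
  have hpow (i : ℕ) : cartier q (F ^ i * derivative F) =
      (cartier q (X ^ i : k[X])).comp F * derivative F := by
    have hX : (X ^ i : k[X]) = X ^ i * derivative X := by rw [derivative_X, mul_one]
    rw [hX]
    by_cases hi : q ∣ i + 1
    · obtain ⟨_ | b, hb⟩ := hi
      · omega
      · rw [hsurvive hb, hsurvive hb, derivative_X, one_mul, X_pow_comp, mul_comm]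
    · rw [hvanish hi, hvanish hi, zero_comp, zero_mul]
  induction g using Polynomial.induction_on' with
  | add g₁ g₂ h₁ h₂ => rw [add_comp, add_mul, map_add, map_add, add_comp, add_mul, h₁, h₂]
  | monomial i a =>
    rw [← smul_X_eq_monomial, smul_comp, X_pow_comp, smul_mul_assoc, map_smul, map_smul,
      smul_comp, smul_mul_assoc, hpow]

end Cartier

section HasseInvariant

theorem not_dvd_centralBinom_mul_add {p c e : ℕ} (hp : p.Prime) (he : 2 * e < p)
    (hc : ¬ p ∣ c.centralBinom) : ¬ p ∣ (p * c + e).centralBinom := by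
  have : Fact p.Prime := ⟨hp⟩
  have hlucas := Choose.choose_modEq_choose_mod_mul_choose_div_nat
    (n := p * (2 * c) + 2 * e) (k := p * c + e) (p := p)
  rw [Nat.mul_add_mod, Nat.mul_add_mod, Nat.mul_add_div hp.pos, Nat.mul_add_div hp.pos,
    Nat.mod_eq_of_lt he, Nat.mod_eq_of_lt (by omega : e < p), Nat.div_eq_of_lt he,
    Nat.div_eq_of_lt (by omega : e < p), add_zero, add_zero,
    show p * (2 * c) + 2 * e = 2 * (p * c + e) by ring] at hlucas
  rw [Nat.centralBinom_eq_two_mul_choose, hlucas.dvd_iff dvd_rfl, hp.dvd_mul, not_or]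
  refine ⟨fun h => ?_, hc⟩
  have hfact : p ∣ (2 * e).factorial := by
    rw [← Nat.choose_mul_factorial_mul_factorial (by omega : e ≤ 2 * e), mul_assoc]
    exact h.mul_right _
  exact he.not_ge (hp.dvd_factorial.1 hfact)

theorem exists_pow_eq_and_not_dvd_centralBinom {p : ℕ} (hp : p.Prime) (hp4 : p % 4 = 1) (m : ℕ) :
    ∃ c, p ^ m = 4 * c + 1 ∧ ¬ p ∣ c.centralBinom := by
  obtain ⟨e, he⟩ : ∃ e, p = 4 * e + 1 := ⟨p / 4, by omega⟩
  induction m with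
  | zero => exact ⟨0, by simp, by simpa using hp.ne_one⟩
  | succ m ih =>
    obtain ⟨c, hc, hdvd⟩ := ih
    refine ⟨p * c + e, ?_, not_dvd_centralBinom_mul_add hp (by omega) hdvd⟩
    rw [pow_succ, hc]
    linear_combination he

theorem coeff_X_pow_three_sub_C_mul_X_pow {R : Type*} [CommRing R] (b : R) (c : ℕ) :
    ((X ^ 3 - C b * X : R[X]) ^ (2 * c)).coeff (4 * c) = (-b) ^ c * c.centralBinom := by
  have hexpand : (X ^ 3 - C b * X : R[X]) ^ (2 * c) =
      expand R 2 ((X + C (-b)) ^ (2 * c)) * X ^ (2 * c) := by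
    rw [map_pow, ← mul_pow, map_add, expand_X, expand_C, C_neg]
    ring
  rw [hexpand, show 4 * c = c * 2 + 2 * c by ring, coeff_mul_X_pow, coeff_expand_mul two_pos,
    coeff_X_add_C_pow, Nat.centralBinom_eq_two_mul_choose, two_mul, Nat.add_sub_cancel]

variable {k : Type*} [Field k] [Fintype k]

local notation "q" => Fintype.card k

/-- The Hasse invariant of the curve `y ^ 2 = f x` with respect to the `q`-power Frobenius, meant
for odd `q` and cubic `f`: the scalar by which the Cartier operator acts on `dx / y`. -/
noncomputable def hasseInvariant (f : k[X]) : k :=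
  (f ^ ((q - 1) / 2)).coeff (q - 1)

theorem cartier_pow_half_card {f : k[X]} (hf : f.natDegree ≤ 3) :
    cartier q (f ^ ((q - 1) / 2)) = C (hasseInvariant f) := by
  have hdeg : (f ^ ((q - 1) / 2)).natDegree ≤ (q - 1) / 2 * 3 :=
    natDegree_pow_le.trans (Nat.mul_le_mul_left _ hf)
  have hq : 0 < q := Fintype.card_pos
  ext j
  rw [coeff_cartier, coeff_C]
  split_ifs with hj
  · rw [hj, zero_add, mul_one, hasseInvariant]
  · have hj2 : q * 2 ≤ q * (j + 1) := Nat.mul_le_mul_left _ (by omega)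
    exact coeff_eq_zero_of_natDegree_lt (by omega)

-- The degree bound says that the pullback `H dt / s` of `dx / y` is regular on the curve
-- `s ^ 2 = t ^ q - t`.
theorem hasseInvariant_eq_zero {f F G H : k[X]} (hq : Odd q) (hf : f.natDegree ≤ 3)
    (hFG : (X ^ q - X) * G ^ 2 = f.comp F) (hF : derivative F ≠ 0) (hH : derivative F = G * H)
    (hdeg : (q - 1) / 2 + H.natDegree + 1 < q) : hasseInvariant f = 0 := by
  obtain ⟨M, hM⟩ := hq
  have hMq : (q - 1) / 2 = M := by omega
  have hpullback : (f ^ M).comp F * derivative F =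
      (X ^ q - X) ^ M * H * expand k q G := by
    have hGq : G ^ q = G ^ (2 * M) * G := by rw [← pow_succ, ← hM]
    rw [pow_comp, ← hFG, FiniteField.expand_card, hH, hGq, mul_pow, ← pow_mul]
    ring
  have hzero := cartier_comp_mul_derivative (f ^ M) F
  rw [hpullback, cartier_mul_expand, cartier_X_pow_sub_X_pow_mul (hMq ▸ hdeg), zero_mul, ← hMq,
    cartier_pow_half_card hf, C_comp] at hzero
  exact C_eq_zero.1 ((mul_eq_zero.1 hzero.symm).resolve_right hF)

theorem hasseInvariant_comp_X_add_C_eq_zero {f F G H : k[X]} (hq : Odd q) (hf : f.natDegree ≤ 3)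
    (hFG : (X ^ q - X) * G ^ 2 = f.comp F) (hF : derivative F ≠ 0) (hH : derivative F = G * H)
    (hdeg : (q - 1) / 2 + H.natDegree + 1 < q) (r : k) :
    hasseInvariant (f.comp (X + C r)) = 0 := by
  have hderiv : derivative (F - C r) = derivative F := by
    rw [derivative_sub, derivative_C, sub_zero]
  refine hasseInvariant_eq_zero (F := F - C r) hq ?_ ?_ (hderiv ▸ hF) (hderiv.trans hH) hdeg
  · rwa [natDegree_comp, natDegree_X_add_C, mul_one]
  · rw [hFG, comp_assoc, add_comp, X_comp, C_comp, sub_add_cancel]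

theorem hasseInvariant_X_pow_three_sub_C_mul_X_ne_zero {p : ℕ} [CharP k p] (hp4 : p % 4 = 1)
    {b : k} (hb : b ≠ 0) : hasseInvariant (X ^ 3 - C b * X) ≠ 0 := by
  obtain ⟨m, hp, hm⟩ := FiniteField.card k p
  obtain ⟨c, hc, hdvd⟩ := exists_pow_eq_and_not_dvd_centralBinom hp hp4 m
  rw [hasseInvariant, show q - 1 = 4 * c by omega, show 4 * c / 2 = 2 * c by omega,
    coeff_X_pow_three_sub_C_mul_X_pow]
  exact mul_ne_zero (pow_ne_zero _ (neg_ne_zero.2 hb))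
    fun h => hdvd ((CharP.cast_eq_zero_iff k p _).1 h)

theorem mod_four_eq_three_of_hasseInvariant_eq_zero {p : ℕ} [CharP k p] (hp2 : p ≠ 2) {b : k}
    (hb : b ≠ 0) (h : hasseInvariant (X ^ 3 - C b * X) = 0) : p % 4 = 3 := by
  have hodd := (CharP.char_is_prime k p).eq_two_or_odd.resolve_left hp2
  by_contra hp4
  exact hasseInvariant_X_pow_three_sub_C_mul_X_ne_zero (p := p) (by omega) hb h

end HasseInvariant

section IntegralPoint

open scoped Finset

theorem exists_derivative_eq_mul_of_separable {R : Type*} [CommRing R] [IsDomain R]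
    {D f F G : R[X]} (hf : f.Separable) (hG : G ≠ 0) (hFG : D * G ^ 2 = f.comp F) :
    ∃ H, derivative F = G * H ∧
      derivative D * G + 2 * D * derivative G = (derivative f).comp F * H := by
  have hderiv : G * (derivative D * G + 2 * D * derivative G) =
      (derivative f).comp F * derivative F := by
    have h := congrArg derivative hFG
    rw [derivative_mul, derivative_sq, derivative_comp, C_ofNat] at h
    linear_combination h
  have hcoprime : IsCoprime G ((derivative f).comp F) := by
    obtain ⟨u, v, huv⟩ := hf
    refine ⟨u.comp F * D * G, v.comp F, ?_⟩
    have h := congrArg (comp · F) huv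
    simp only [add_comp, mul_comp, one_comp, ← hFG] at h
    linear_combination h
  obtain ⟨H, hH⟩ := hcoprime.dvd_of_dvd_mul_left ⟨_, hderiv.symm⟩
  refine ⟨H, hH, mul_left_cancel₀ hG ?_⟩
  rw [hderiv, hH]
  ring

theorem exists_comp_X_add_C_eq_of_eval_derivative_eq {R : Type*} [CommRing R] [IsDomain R]
    {f : R[X]} {e₁ e₂ e₃ : R} (hf : f = (X - C e₁) * (X - C e₂) * (X - C e₃)) (h₁₂ : e₁ ≠ e₂)
    (h : (derivative f).eval e₁ = (derivative f).eval e₂) :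
    ∃ r a : R, 2 * a ≠ 0 ∧ f.comp (X + C r) = X ^ 3 - C (a ^ 2) * X := by
  have hmid : e₁ + e₂ = 2 * e₃ := by
    simp only [hf, derivative_mul, derivative_X_sub_C, eval_add, eval_mul, eval_sub, eval_X,
      eval_C, eval_one] at h
    exact mul_left_cancel₀ (sub_ne_zero.2 h₁₂) (by linear_combination h)
  refine ⟨e₃, e₁ - e₃, fun h0 => h₁₂ (by linear_combination h0 - hmid), ?_⟩
  have he₂ : e₂ = 2 * e₃ - e₁ := by linear_combination hmid
  simp only [hf, he₂, mul_comp, sub_comp, X_comp, C_comp, C_sub, C_mul, C_pow, C_ofNat,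
    ofNat_comp]
  ring

theorem exists_eq_insert_of_card_eq_three {α : Type*} [DecidableEq α] {s : Finset α}
    (hs : #s = 3) {x y : α} (hx : x ∈ s) (hy : y ∈ s) (hxy : x ≠ y) :
    ∃ z, z ≠ x ∧ z ≠ y ∧ s = {x, y, z} := by
  obtain ⟨z, hz⟩ := Finset.card_eq_one.1 (show #((s.erase x).erase y) = 1 by
    rw [Finset.card_erase_of_mem (Finset.mem_erase.2 ⟨hxy.symm, hy⟩), Finset.card_erase_of_mem hx,
      hs])
  have hz' : z ∈ (s.erase x).erase y := hz ▸ Finset.mem_singleton_self z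
  simp only [Finset.mem_erase] at hz'
  refine ⟨z, hz'.2.1, hz'.1, ?_⟩
  rw [← hz, Finset.insert_erase (Finset.mem_erase.2 ⟨hxy.symm, hy⟩), Finset.insert_erase hx]

theorem card_filter_two_mul_add_lt_sum_le_one {α : Type*} {s : Finset α} (hs : #s = 3) {w : α → ℕ}
    {d : ℕ} (hle : ∀ x ∈ s, w x ≤ d) : #{x ∈ s | 2 * w x + d < ∑ y ∈ s, w y} ≤ 1 := by
  classical
  refine Finset.card_le_one.2 fun x hx y hy => ?_
  rw [Finset.mem_filter] at hx hy
  by_contra hxy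
  obtain ⟨z, hzx, hzy, rfl⟩ := exists_eq_insert_of_card_eq_three hs hx.1 hy.1 hxy
  have hz := hle z (by simp)
  rw [Finset.sum_insert (by simp [hxy, hzx.symm]), Finset.sum_pair hzy.symm] at hx hy
  omega

theorem prod_roots_toFinset_eq {R : Type*} [CommRing R] [IsDomain R] [DecidableEq R] {f : R[X]}
    (hf : f.Monic) (hcard : f.natDegree ≤ #f.roots.toFinset) :
    ∏ e ∈ f.roots.toFinset, (X - C e) = f := by
  have hdedup : f.roots.toFinset.val = f.roots :=
    Multiset.eq_of_le_of_card_le (Multiset.dedup_le _) ((card_roots' f).trans hcard)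
  have hle : f.natDegree ≤ f.roots.card := hcard.trans (Multiset.toFinset_card_le _)
  rw [Finset.prod_eq_multiset_prod, hdedup]
  exact prod_multiset_X_sub_C_of_monic_of_roots_card_eq hf (le_antisymm (card_roots' f) hle)

theorem card_fiber_le_natDegree {R : Type*} [CommRing R] [IsDomain R] [Fintype R]
    [DecidableEq R] {F : R[X]} (hF : 0 < F.natDegree) (e : R) :
    #{α | F.eval α = e} ≤ F.natDegree := by
  have hFe : F - C e ≠ 0 := fun h => hF.ne' (by rw [sub_eq_zero.1 h, natDegree_C])
  rw [← natDegree_sub_C (a := e)]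
  exact card_le_degree_of_subset_roots fun α hα => by simpa [hFe, sub_eq_zero] using hα

variable {k : Type*} [Field k] [Fintype k]

local notation "q" => Fintype.card k

theorem natDegree_le_card_roots_of_isRoot_eval [DecidableEq k] {f F : k[X]} (hf : f ≠ 0)
    (hF : 0 < F.natDegree) (hroot : ∀ α, f.IsRoot (F.eval α))
    (hdeg : (f.natDegree - 1) * F.natDegree < q) : f.natDegree ≤ #f.roots.toFinset := by
  have himage : Finset.univ.image (F.eval ·) ⊆ f.roots.toFinset := fun e he => by
    obtain ⟨α, -, rfl⟩ := Finset.mem_image.1 he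
    exact Multiset.mem_toFinset.2 ((mem_roots hf).2 (hroot α))
  by_contra! hlt
  refine hdeg.not_ge ?_
  calc q ≤ F.natDegree * #(Finset.univ.image (F.eval ·)) :=
        FiniteField.card_image_polynomial_eval (natDegree_pos_iff_degree_pos.1 hF)
    _ ≤ F.natDegree * (f.natDegree - 1) :=
        Nat.mul_le_mul_left _ ((Finset.card_le_card himage).trans (Nat.le_sub_one_of_lt hlt))
    _ = (f.natDegree - 1) * F.natDegree := mul_comm _ _

theorem card_fiber_le_max_natDegree [DecidableEq k] {f F G H : k[X]}
    (hGH : derivative (X ^ q - X) * G + 2 * (X ^ q - X) * derivative G =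
      (derivative f).comp F * H) {e : k} (he : G + C ((derivative f).eval e) * H ≠ 0) :
    #{α | F.eval α = e} ≤ max G.natDegree H.natDegree := by
  have hroots : ({α | F.eval α = e} : Finset k).val ⊆
      (G + C ((derivative f).eval e) * H).roots := fun α hα => by
    have hα : F.eval α = e := by simpa using hα
    have h := congrArg (eval α) hGH
    simp only [derivative_sub, derivative_X_pow, derivative_X, Nat.cast_card_eq_zero, C_0,
      eval_add, eval_sub, eval_mul, eval_comp, eval_pow, eval_X, eval_zero, eval_one,
      FiniteField.pow_card, hα] at h
    rw [mem_roots he, IsRoot, eval_add, eval_mul, eval_C]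
    linear_combination -h
  exact (card_le_degree_of_subset_roots hroots).trans
    (natDegree_add_le_of_degree_le (le_max_left _ _)
      ((natDegree_C_mul_le _ _).trans (le_max_right _ _)))

theorem exists_eq_prod_and_eval_derivative_eq [DecidableEq k] {f F G H : k[X]} (hfm : f.Monic)
    (hf3 : f.natDegree = 3) (hroots : f.natDegree ≤ #f.roots.toFinset) (hF : 0 < F.natDegree)
    (hroot : ∀ α, f.IsRoot (F.eval α)) (hH : H ≠ 0)
    (hGH : derivative (X ^ q - X) * G + 2 * (X ^ q - X) * derivative G =
      (derivative f).comp F * H)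
    (hdeg : 2 * max G.natDegree H.natDegree + F.natDegree < q) :
    ∃ e₁ e₂ e₃ : k, f = (X - C e₁) * (X - C e₂) * (X - C e₃) ∧ e₁ ≠ e₂ ∧
      (derivative f).eval e₁ = (derivative f).eval e₂ := by
  set s := f.roots.toFinset with hs
  have hs3 : #s = 3 :=
    hf3 ▸ le_antisymm ((Multiset.toFinset_card_le _).trans (card_roots' f)) hroots
  let w (e : k) : ℕ := #{α | F.eval α = e}
  have hsum : ∑ e ∈ s, w e = q := (Finset.card_eq_sum_card_fiberwise fun α _ =>
    Multiset.mem_toFinset.2 ((mem_roots hfm.ne_zero).2 (hroot α))).symm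
  have hsmall : #{e ∈ s | 2 * w e + F.natDegree < q} ≤ 1 :=
    hsum ▸ card_filter_two_mul_add_lt_sum_le_one hs3 fun e _ => card_fiber_le_natDegree hF e
  have hsplit := s.card_filter_add_card_filter_not fun e => 2 * w e + F.natDegree < q
  obtain ⟨e₁, he₁, e₂, he₂, h₁₂⟩ :=
    Finset.one_lt_card.1 (show 1 < #{e ∈ s | ¬ 2 * w e + F.natDegree < q} by omega)
  have hlarge {e : k} (he : ¬ 2 * w e + F.natDegree < q) :
      G + C ((derivative f).eval e) * H = 0 := by
    by_contra hne
    have hle : w e ≤ max G.natDegree H.natDegree := card_fiber_le_max_natDegree hGH hne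
    omega
  rw [Finset.mem_filter] at he₁ he₂
  obtain ⟨e₃, h₃₁, h₃₂, hs₃⟩ := exists_eq_insert_of_card_eq_three hs3 he₁.1 he₂.1 h₁₂
  refine ⟨e₁, e₂, e₃, ?_, h₁₂, C_injective (mul_right_cancel₀ hH ?_)⟩
  · rw [← prod_roots_toFinset_eq hfm hroots, ← hs, hs₃,
      Finset.prod_insert (by simp [h₁₂, h₃₁.symm]), Finset.prod_pair h₃₂.symm, mul_assoc]
  · linear_combination hlarge he₁.2 - hlarge he₂.2

theorem card_add_two_mul_natDegree_eq {f F G : k[X]} (hG : G ≠ 0)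
    (hFG : (X ^ q - X) * G ^ 2 = f.comp F) :
    q + 2 * G.natDegree = f.natDegree * F.natDegree := by
  rw [← natDegree_comp, ← hFG,
    natDegree_mul (FiniteField.X_pow_card_sub_X_ne_zero k Fintype.one_lt_card) (pow_ne_zero 2 hG),
    FiniteField.X_pow_card_sub_X_natDegree_eq k Fintype.one_lt_card, natDegree_pow]

theorem mod_four_eq_three_and_exists_comp_X_add_C_eq (p : ℕ) [CharP k p] {f F G : k[X]}
    (hfm : f.Monic) (hf3 : f.natDegree = 3) (hFG : (X ^ q - X) * G ^ 2 = f.comp F)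
    (hF : derivative F ≠ 0) (hdeg : 2 * F.natDegree < q) :
    p % 4 = 3 ∧ ∃ r a : k, a ≠ 0 ∧ f.comp (X + C r) = X ^ 3 - C (a ^ 2) * X := by
  classical
  have hF0 : 0 < F.natDegree :=
    Nat.pos_of_ne_zero fun h => hF (derivative_of_natDegree_zero h)
  have hroot (α : k) : f.IsRoot (F.eval α) := by
    rw [IsRoot, ← eval_comp, ← hFG]
    simp [FiniteField.pow_card]
  have hroots := natDegree_le_card_roots_of_isRoot_eval hfm.ne_zero hF0 hroot (by rwa [hf3])
  have hsep : f.Separable := by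
    rw [← prod_roots_toFinset_eq hfm hroots, separable_prod_X_sub_C_iff']
    exact fun _ _ _ _ h => h
  have hG : G ≠ 0 := by
    rintro rfl
    have h0 := congrArg natDegree hFG
    rw [zero_pow two_ne_zero, mul_zero, natDegree_zero, natDegree_comp, hf3] at h0
    omega
  have hGdeg := card_add_two_mul_natDegree_eq hG hFG
  rw [hf3] at hGdeg
  obtain ⟨H, hFH, hGH⟩ := exists_derivative_eq_mul_of_separable hsep hG hFG
  have hH : H ≠ 0 := right_ne_zero_of_mul (hFH ▸ hF)
  have hHdeg : G.natDegree + H.natDegree < F.natDegree := by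
    rw [← natDegree_mul hG hH, ← hFH]
    exact natDegree_derivative_lt hF0.ne'
  obtain ⟨e₁, e₂, e₃, hf, h₁₂, he⟩ := exists_eq_prod_and_eval_derivative_eq hfm hf3
    hroots hF0 hroot hH hGH (by omega)
  obtain ⟨r, a, h2a, hra⟩ := exists_comp_X_add_C_eq_of_eval_derivative_eq hf h₁₂ he
  have ha : a ≠ 0 := right_ne_zero_of_mul h2a
  have hp2 : p ≠ 2 := fun h => left_ne_zero_of_mul h2a (by
    exact_mod_cast h ▸ CharP.cast_eq_zero k p)
  have hq : Odd q := Nat.odd_iff.2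
    (FiniteField.odd_card_of_char_ne_two ((ringChar.eq k p).trans_ne hp2))
  have hhasse := hasseInvariant_comp_X_add_C_eq_zero hq hf3.le hFG hF hFH (by omega) r
  rw [hra] at hhasse
  exact ⟨mod_four_eq_three_of_hasseInvariant_eq_zero hp2 (pow_ne_zero 2 ha) hhasse, r, a, ha, hra⟩

end IntegralPoint

section Trace

/-- The polynomial `∑_{i < m} X ^ (p ^ i)`, which induces the trace map from the field with `p ^ m`
elements to its prime field. -/
noncomputable def tracePolynomial (R : Type*) [Semiring R] (p m : ℕ) : R[X] :=
  ∑ i ∈ Finset.range m, X ^ p ^ i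

variable {R : Type*} (p m : ℕ)

theorem tracePolynomial_pow_sub [CommRing R] [Fact p.Prime] [CharP R p] :
    tracePolynomial R p m ^ p - tracePolynomial R p m = X ^ p ^ m - X := by
  rw [tracePolynomial, sum_pow_char p, ← Finset.sum_sub_distrib]
  simp only [← pow_mul, ← pow_succ]
  rw [Finset.sum_range_sub fun i => (X : R[X]) ^ p ^ i, pow_zero, pow_one]

theorem derivative_tracePolynomial_succ [Semiring R] [CharP R p] :
    derivative (tracePolynomial R p (m + 1)) = 1 := by
  rw [tracePolynomial, derivative_sum, Finset.sum_range_succ', Finset.sum_eq_zero fun i _ => by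
    rw [derivative_X_pow, pow_succ, Nat.cast_mul, CharP.cast_eq_zero R p, mul_zero, C_0, zero_mul]]
  rw [pow_zero, pow_one, derivative_X, zero_add]

theorem natDegree_tracePolynomial_succ_le [Semiring R] (hp : 0 < p) :
    (tracePolynomial R p (m + 1)).natDegree ≤ p ^ m :=
  natDegree_sum_le_of_forall_le _ _ fun _ hi => (natDegree_X_pow_le _).trans
    (Nat.pow_le_pow_right hp (Nat.lt_succ_iff.1 (Finset.mem_range.1 hi)))

variable {k : Type*} [Field k] {p}

-- With `p = 4 * e + 3` and `f = X ^ 3 - a ^ 2 * X`, the choice `F = a * S ^ (2 * e + 1)` gives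
-- `f(F) = a ^ 3 * S ^ (2 * e) * (S ^ p - S) = (a * S ^ e) ^ 2 * D`.
theorem exists_point_of_pow_sub_eq [CharP k p] (hp4 : p % 4 = 3) {a : k} (ha : a ≠ 0) {D S : k[X]}
    (hS : S ^ p - S = C a⁻¹ * D) (hS' : derivative S = C a⁻¹) :
    ∃ F G : k[X], D * G ^ 2 = F ^ 3 - C (a ^ 2) * F ∧ derivative F ≠ 0 ∧
      F.natDegree ≤ (p - 1) / 2 * S.natDegree := by
  obtain ⟨e, rfl⟩ : ∃ e, p = 4 * e + 3 := ⟨p / 4, by omega⟩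
  refine ⟨C a * S ^ (2 * e + 1), C a * S ^ e, ?_, ?_, ?_⟩
  · have hD : D = C a * (S ^ (4 * e + 3) - S) := by
      rw [hS, ← mul_assoc, ← C_mul, mul_inv_cancel₀ ha, C_1, one_mul]
    rw [hD, C_pow]
    ring
  · have hS0 : S ≠ 0 := by
      rintro rfl
      exact C_ne_zero.2 (inv_ne_zero ha) (hS'.symm.trans derivative_zero)
    have he : ((2 * e + 1 : ℕ) : k) ≠ 0 := fun h =>
      absurd (Nat.le_of_dvd (by omega) ((CharP.cast_eq_zero_iff k (4 * e + 3) _).1 h)) (by omega)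
    rw [derivative_C_mul, derivative_pow, hS']
    exact mul_ne_zero (C_ne_zero.2 ha)
      (mul_ne_zero (mul_ne_zero (C_ne_zero.2 he) (pow_ne_zero _ hS0))
        (C_ne_zero.2 (inv_ne_zero ha)))
  · rw [show (4 * e + 3 - 1) / 2 = 2 * e + 1 by omega]
    exact (natDegree_C_mul_le _ _).trans natDegree_pow_le

variable [Fintype k]

local notation "q" => Fintype.card k

theorem exists_point_X_pow_three_sub [CharP k p] (hp4 : p % 4 = 3) {a : k} (ha : a ≠ 0) :
    ∃ F G : k[X], (X ^ q - X) * G ^ 2 = F ^ 3 - C (a ^ 2) * F ∧ derivative F ≠ 0 ∧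
      2 * F.natDegree < q := by
  obtain ⟨⟨m, hm0⟩, hp, hm⟩ := FiniteField.card k p
  obtain ⟨m, rfl⟩ := Nat.exists_eq_add_one_of_ne_zero hm0.ne'
  rw [PNat.mk_coe] at hm
  have : Fact p.Prime := ⟨hp⟩
  let S : k[X] := (tracePolynomial k p (m + 1)).comp (C a⁻¹ * X)
  have hS : S ^ p - S = C a⁻¹ * (X ^ q - X) := by
    rw [← pow_comp, ← sub_comp, tracePolynomial_pow_sub, ← hm, sub_comp, X_pow_comp, X_comp,
      mul_pow, ← C_pow, FiniteField.pow_card, mul_sub]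
  have hS' : derivative S = C a⁻¹ := by
    rw [derivative_comp, derivative_tracePolynomial_succ, one_comp, derivative_C_mul, derivative_X,
      mul_one, mul_one]
  have hSdeg : S.natDegree ≤ p ^ m := by
    rw [natDegree_comp, natDegree_C_mul_X _ (inv_ne_zero ha), mul_one]
    exact natDegree_tracePolynomial_succ_le p m hp.pos
  obtain ⟨F, G, hFG, hF, hdeg⟩ := exists_point_of_pow_sub_eq hp4 ha hS hS'
  refine ⟨F, G, hFG, hF, ?_⟩
  calc 2 * F.natDegree ≤ 2 * ((p - 1) / 2 * p ^ m) :=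
        Nat.mul_le_mul_left 2 (hdeg.trans (Nat.mul_le_mul_left _ hSdeg))
    _ = (2 * ((p - 1) / 2)) * p ^ m := (mul_assoc _ _ _).symm
    _ < p * p ^ m := Nat.mul_lt_mul_of_pos_right (by omega) (pow_pos hp.pos m)
    _ = q := by rw [hm, pow_succ']

end Trace

theorem stmt6_general {k : Type*} [Field k] [Fintype k] (p : ℕ) [CharP k p] {f : k[X]}
    (hfm : f.Monic) (hf3 : f.natDegree = 3) :
    (∃ F G : k[X], (X ^ Fintype.card k - X) * G ^ 2 = f.comp F ∧ derivative F ≠ 0 ∧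
        2 * F.natDegree < Fintype.card k) ↔
      p % 4 = 3 ∧ ∃ r a : k, a ≠ 0 ∧ f.comp (X + C r) = X ^ 3 - C (a ^ 2) * X := by
  constructor
  · rintro ⟨F, G, hFG, hF, hdeg⟩
    exact mod_four_eq_three_and_exists_comp_X_add_C_eq p hfm hf3 hFG hF hdeg
  · rintro ⟨hp4, r, a, ha, hra⟩
    obtain ⟨F, G, hFG, hF, hdeg⟩ := exists_point_X_pow_three_sub hp4 ha
    have hcomp : f.comp (F + C r) = F ^ 3 - C (a ^ 2) * F := by
      rw [← X_comp (p := F), ← C_comp (a := r) (p := F), ← add_comp, ← comp_assoc, hra]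
      simp
    exact ⟨F + C r, G, hFG.trans hcomp.symm, by rwa [derivative_add, derivative_C, add_zero],
      by rwa [natDegree_add_C]⟩

theorem stmt6 (p l n : ℕ) (hp : p.Prime) (hpodd : p ≠ 2) (hl : 0 < l) (hn : 0 < n)
    (Fqn : Type*) [Field Fqn] [Fintype Fqn]
    (hcard : Fintype.card Fqn = (p ^ l) ^ n)
    (f : Polynomial Fqn) (hfm : f.Monic) (hf : Squarefree f) (hf3 : f.natDegree = 3) :
    (∃ F G : Polynomial Fqn,
        (X ^ ((p ^ l) ^ n) - X) * G ^ 2 = f.comp F ∧ derivative F ≠ 0 ∧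
          2 * F.natDegree ≤ (p ^ l) ^ n - 1) ↔
      (p % 4 = 3 ∧
        ∃ (r a : Fqn), a ≠ 0 ∧ f.comp (X + C r) = X ^ 3 - C (a ^ 2) * X) := by
  have : CharP Fqn p := charP_of_card_eq_prime_pow (hp := ⟨hp⟩) (hcard.trans (pow_mul p l n).symm)
  simpa only [← hcard, Nat.le_sub_one_iff_lt Fintype.card_pos] using stmt6_general p hfm hf3
end

section
/- Let q be a prime power and let n, k be positive integers such that r = (q^n + 1)/(q^k + 1) is an integer. Let a, b, c, d ∈ 𝔽_q and a₀, b₀, c₀, d₀ ∈ 𝔽_q be two quadruples each satisfying the orthogonality conditions a² + c² = 1, b² + d² = 1, ab + cd = 0 (and similarly for a₀, b₀, c₀, d₀). Then the identity (a·t^r + b)^{q^k+1} + (c·t^r + d)^{q^k+1} = (a₀·t + b₀)^{q^n+1} + (c₀·t + d₀)^{q^n+1} holds in 𝔽_q[t]; both sides equal t^{q^n+1} + 1. In particular, the curve (a·t^r+b, c·t^r+d, a₀·t+b₀, c₀·t+d₀) lies on the Hermitian Fermat surface X₀^{q^k+1} + X₁^{q^k+1} = X₂^{q^n+1} + X₃^{q^n+1}.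 -/
open Polynomial

/-!
For `q = #K`, the form `∑ i, x i ^ (q ^ m + 1) = ∑ i, σ (x i) * x i`, with `σ` the `q ^ m`-power
Frobenius, is the Hermitian analogue of the dot product. A matrix `M` over `K` commutes with `σ`,
which fixes `K`; so if `Mᵀ * M = 1`, then `M` preserves this form because it preserves the dot
product. The two identities are this invariance at the vectors `(X ^ r, 1)`, for `m = k`, and
`(X, 1)`, for `m = n`; the exponents agree because `r * (q ^ k + 1) = q ^ n + 1`.
-/

section Isometry

open Matrix

variable {ι κ R : Type*} [Fintype κ] [CommSemiring R]

theorem mulVec_dotProduct_mulVec_of_transpose_mul_self [Fintype ι] [DecidableEq κ]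
    {M : Matrix ι κ R} (hM : Mᵀ * M = 1) (u v : κ → R) : (M *ᵥ u) ⬝ᵥ (M *ᵥ v) = u ⬝ᵥ v := by
  rw [dotProduct_mulVec, ← mulVec_transpose, mulVec_mulVec, hM, one_mulVec]

theorem algHom_comp_map_algebraMap_mulVec {A B : Type*} [CommSemiring A] [CommSemiring B]
    [Algebra R A] [Algebra R B] (σ : A →ₐ[R] B) (M : Matrix ι κ R) (v : κ → A) :
    σ ∘ (M.map (algebraMap R A) *ᵥ v) = M.map (algebraMap R B) *ᵥ (σ ∘ v) := by
  ext i
  simp [mulVec, dotProduct]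

theorem transpose_mul_self_fin_two {a b c d : R} (hac : a ^ 2 + c ^ 2 = 1) (hbd : b ^ 2 + d ^ 2 = 1)
    (horth : a * b + c * d = 0) : !![a, b; c, d]ᵀ * !![a, b; c, d] = 1 := by
  have horth' : b * a + d * c = 0 := by rw [mul_comm b, mul_comm d, horth]
  have htranspose : !![a, b; c, d]ᵀ = !![a, c; b, d] := eta_fin_two _
  rw [htranspose, mul_fin_two, ← sq, ← sq, ← sq, ← sq, hac, hbd, horth, horth', one_fin_two]

variable {A K : Type*} [CommRing A] [Field K] [Fintype K] [Algebra K A]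

theorem sum_pow_card_pow_add_one_eq_dotProduct (m : ℕ) (v : κ → A) :
    ∑ j, v j ^ (Fintype.card K ^ m + 1) = ((FiniteField.frobeniusAlgHom K A ^ m) ∘ v) ⬝ᵥ v := by
  simp [dotProduct, pow_succ, AlgHom.coe_pow, FiniteField.coe_frobeniusAlgHom, pow_iterate]

theorem sum_map_algebraMap_mulVec_pow_card_pow_add_one [Fintype ι] [DecidableEq κ]
    {M : Matrix ι κ K} (hM : Mᵀ * M = 1) (m : ℕ) (v : κ → A) :
    ∑ i, (M.map (algebraMap K A) *ᵥ v) i ^ (Fintype.card K ^ m + 1) =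
      ∑ j, v j ^ (Fintype.card K ^ m + 1) := by
  have hMA : (M.map (algebraMap K A))ᵀ * M.map (algebraMap K A) = 1 := by
    rw [← transpose_map, ← Matrix.map_mul, hM, Matrix.map_one _ (map_zero _) (map_one _)]
  rw [sum_pow_card_pow_add_one_eq_dotProduct, sum_pow_card_pow_add_one_eq_dotProduct,
    algHom_comp_map_algebraMap_mulVec, mulVec_dotProduct_mulVec_of_transpose_mul_self hMA]

theorem add_pow_card_pow_add_one_of_orthogonal {a b c d : K} (hac : a ^ 2 + c ^ 2 = 1)
    (hbd : b ^ 2 + d ^ 2 = 1) (horth : a * b + c * d = 0) (m : ℕ) (x y : A) :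
    (algebraMap K A a * x + algebraMap K A b * y) ^ (Fintype.card K ^ m + 1) +
        (algebraMap K A c * x + algebraMap K A d * y) ^ (Fintype.card K ^ m + 1) =
      x ^ (Fintype.card K ^ m + 1) + y ^ (Fintype.card K ^ m + 1) := by
  simpa [mulVec, dotProduct, Fin.sum_univ_two] using
    sum_map_algebraMap_mulVec_pow_card_pow_add_one
      (transpose_mul_self_fin_two hac hbd horth) m ![x, y]

end Isometry

theorem affine_pow_card_pow_add_one_of_orthogonal {K : Type*} [Field K] [Fintype K] {a b c d : K}
    (hac : a ^ 2 + c ^ 2 = 1) (hbd : b ^ 2 + d ^ 2 = 1) (horth : a * b + c * d = 0) (m : ℕ)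
    (P : K[X]) :
    (C a * P + C b) ^ (Fintype.card K ^ m + 1) + (C c * P + C d) ^ (Fintype.card K ^ m + 1) =
      P ^ (Fintype.card K ^ m + 1) + 1 := by
  simpa using add_pow_card_pow_add_one_of_orthogonal hac hbd horth m P 1

theorem stmt9 (Fq : Type*) [Field Fq] [Fintype Fq] (n k : ℕ) (hn : 0 < n) (hk : 0 < k)
    (hdvd : (Fintype.card Fq ^ k + 1) ∣ (Fintype.card Fq ^ n + 1))
    (r : ℕ) (hr : r = (Fintype.card Fq ^ n + 1) / (Fintype.card Fq ^ k + 1))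
    (a b c d a₀ b₀ c₀ d₀ : Fq)
    (h1 : a ^ 2 + c ^ 2 = 1) (h2 : b ^ 2 + d ^ 2 = 1) (h3 : a * b + c * d = 0)
    (h1₀ : a₀ ^ 2 + c₀ ^ 2 = 1) (h2₀ : b₀ ^ 2 + d₀ ^ 2 = 1)
    (h3₀ : a₀ * b₀ + c₀ * d₀ = 0) :
    (C a * X ^ r + C b : Polynomial Fq) ^ (Fintype.card Fq ^ k + 1)
        + (C c * X ^ r + C d) ^ (Fintype.card Fq ^ k + 1)
      = X ^ (Fintype.card Fq ^ n + 1) + 1 ∧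
    (C a₀ * X + C b₀ : Polynomial Fq) ^ (Fintype.card Fq ^ n + 1)
        + (C c₀ * X + C d₀) ^ (Fintype.card Fq ^ n + 1)
      = X ^ (Fintype.card Fq ^ n + 1) + 1 := by
  have hrk : r * (Fintype.card Fq ^ k + 1) = Fintype.card Fq ^ n + 1 := by
    rw [hr, Nat.div_mul_cancel hdvd]
  constructor
  · rw [affine_pow_card_pow_add_one_of_orthogonal h1 h2 h3, ← pow_mul, hrk]
  · exact affine_pow_card_pow_add_one_of_orthogonal h1₀ h2₀ h3₀ n X
end

section
/- Let q be an odd prime power with q ≡ 3 (mod 4), let n be an odd positive integer, let k be a positive divisor of n, and set r = (q^n + 1)/(q^k + 1) (an integer since n/k is odd). Let a, b, c, d ∈ 𝔽_q satisfy a² + c² = 1, b² + d² = 1, ab + cd = 0. Define X₀ = −(c·t^r + d)^{(q^k+1)/2} and Y₀ = (a·t^r + b)^{(q^k+1)/2} · (c·t^r + d)^{(q^k+1)/4} in 𝔽_q[t] (note 4 divides q^k + 1 since q ≡ 3 (mod 4) and k is odd). Then Y₀² = X₀³ − (t^{q^n+1} + 1)·X₀ in 𝔽_q[t]; that is, (X₀,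 Y₀) is an ∞-integral point of the quartic twist y² = x³ − (t^{q^n+1} + 1)·x over 𝔽_q(t). -/
open Polynomial

/-!
The bilinear form `x₁ * y₁ + x₂ * y₂` is invariant under orthogonal matrices. Where the `q`-th power
map is linear over the ring containing `a, b, c, d`, so is the `Q`-th power map for `Q = q ^ k`, and
applying the invariance to `(s, 1)` and its conjugate `(s ^ Q, 1)` gives
`u ^ (Q + 1) + v ^ (Q + 1) = s ^ (Q + 1) + 1` for `u = a * s + b` and `v = c * s + d`.
On the other hand `y ^ 2 = x ^ 3 - (f ^ 2 + g ^ 4) * x` contains the point `(-g ^ 2, f * g)`. Since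
`4 ∣ Q + 1`, one may take `f = u ^ ((Q + 1) / 2)` and `g = v ^ ((Q + 1) / 4)`; then `s = t ^ r`
turns `s ^ (Q + 1)` into `t ^ (q ^ n + 1)`.
-/

theorem pow_add_one_dvd_pow_add_one (q : ℕ) {k n : ℕ} (hkn : k ∣ n) (hn : Odd n) :
    q ^ k + 1 ∣ q ^ n + 1 := by
  obtain ⟨j, rfl⟩ := hkn
  simpa only [pow_mul, one_pow] using
    (Nat.Odd.of_mul_right hn).nat_add_dvd_pow_add_pow (q ^ k) 1

theorem four_dvd_pow_add_one {q k : ℕ} (hq : q % 4 = 3) (hk : Odd k) : 4 ∣ q ^ k + 1 := by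
  have four_dvd : 4 ∣ q + 1 := by omega
  have add_one_dvd : q + 1 ∣ q ^ k + 1 := by
    simpa only [pow_one] using pow_add_one_dvd_pow_add_one q (one_dvd k) hk
  exact four_dvd.trans add_one_dvd

theorem mul_sq_eq_neg_sq_cube_sub {A : Type*} [CommRing A] (f g : A) :
    (f * g) ^ 2 = (-g ^ 2) ^ 3 - (f ^ 2 + g ^ 4) * (-g ^ 2) := by
  ring

section Orthogonal

variable {R A : Type*} [CommRing R] [CommRing A] [Algebra R A] {a b c d : R}

theorem affine_mul_add_affine_mul_of_orthogonal
    (h1 : a ^ 2 + c ^ 2 = 1) (h2 : b ^ 2 + d ^ 2 = 1) (h3 : a * b + c * d = 0) (x y : R) :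
    (a * x + b) * (a * y + b) + (c * x + d) * (c * y + d) = x * y + 1 := by
  linear_combination x * y * h1 + h2 + (x + y) * h3

theorem affine_pow_add_affine_pow_of_orthogonal {q : ℕ} (φ : A →ₐ[R] A) (hφ : ∀ x, φ x = x ^ q)
    (h1 : a ^ 2 + c ^ 2 = 1) (h2 : b ^ 2 + d ^ 2 = 1) (h3 : a * b + c * d = 0) (x : A) :
    (algebraMap R A a * x + algebraMap R A b) ^ (q + 1)
        + (algebraMap R A c * x + algebraMap R A d) ^ (q + 1)
      = x ^ (q + 1) + 1 := by
  have affine_pow (α β : R) : (algebraMap R A α * x + algebraMap R A β) ^ q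
      = algebraMap R A α * x ^ q + algebraMap R A β := by
    simp only [← hφ, map_add, map_mul, AlgHom.commutes]
  rw [pow_succ, pow_succ, pow_succ, affine_pow, affine_pow]
  apply affine_mul_add_affine_mul_of_orthogonal
  · simpa only [map_add, map_pow, map_one] using congrArg (algebraMap R A) h1
  · simpa only [map_add, map_pow, map_one] using congrArg (algebraMap R A) h2
  · simpa only [map_add, map_mul, map_zero] using congrArg (algebraMap R A) h3

theorem sq_eq_cube_sub_of_orthogonal {q : ℕ} (φ : A →ₐ[R] A) (hφ : ∀ x, φ x = x ^ q)
    (hq : 4 ∣ q + 1)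
    (h1 : a ^ 2 + c ^ 2 = 1) (h2 : b ^ 2 + d ^ 2 = 1) (h3 : a * b + c * d = 0) (x : A) :
    ((algebraMap R A a * x + algebraMap R A b) ^ ((q + 1) / 2)
        * (algebraMap R A c * x + algebraMap R A d) ^ ((q + 1) / 4)) ^ 2
      = (-(algebraMap R A c * x + algebraMap R A d) ^ ((q + 1) / 2)) ^ 3
        - (x ^ (q + 1) + 1) * -(algebraMap R A c * x + algebraMap R A d) ^ ((q + 1) / 2) := by
  set u := algebraMap R A a * x + algebraMap R A b
  set v := algebraMap R A c * x + algebraMap R A d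
  have norm_eq : u ^ (q + 1) + v ^ (q + 1) = x ^ (q + 1) + 1 :=
    affine_pow_add_affine_pow_of_orthogonal φ hφ h1 h2 h3 x
  have u_pow : (u ^ ((q + 1) / 2)) ^ 2 = u ^ (q + 1) := by
    rw [← pow_mul, Nat.div_mul_cancel (dvd_trans (by norm_num) hq)]
  have v_pow_half : (v ^ ((q + 1) / 4)) ^ 2 = v ^ ((q + 1) / 2) := by
    rw [← pow_mul]
    congr 1
    omega
  have v_pow : (v ^ ((q + 1) / 4)) ^ 4 = v ^ (q + 1) := by
    rw [← pow_mul, Nat.div_mul_cancel hq]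
  simpa only [u_pow, v_pow_half, v_pow, norm_eq] using
    mul_sq_eq_neg_sq_cube_sub (u ^ ((q + 1) / 2)) (v ^ ((q + 1) / 4))

theorem stmt10_general {q : ℕ} (φ : A →ₐ[R] A) (hφ : ∀ x, φ x = x ^ q) (hq : q % 4 = 3)
    {n k : ℕ} (hn : Odd n) (hkn : k ∣ n)
    (h1 : a ^ 2 + c ^ 2 = 1) (h2 : b ^ 2 + d ^ 2 = 1) (h3 : a * b + c * d = 0)
    (t : A) {r : ℕ} (hr : r = (q ^ n + 1) / (q ^ k + 1)) {X₀ Y₀ : A}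
    (hX₀ : X₀ = -(algebraMap R A c * t ^ r + algebraMap R A d) ^ ((q ^ k + 1) / 2))
    (hY₀ : Y₀ = (algebraMap R A a * t ^ r + algebraMap R A b) ^ ((q ^ k + 1) / 2)
        * (algebraMap R A c * t ^ r + algebraMap R A d) ^ ((q ^ k + 1) / 4)) :
    Y₀ ^ 2 = X₀ ^ 3 - (t ^ (q ^ n + 1) + 1) * X₀ := by
  have hφk (x : A) : (φ ^ k) x = x ^ q ^ k := by
    rw [AlgHom.coe_pow, funext hφ, pow_iterate]
  have four_dvd : 4 ∣ q ^ k + 1 := four_dvd_pow_add_one hq (hn.of_dvd_nat hkn)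
  have t_pow : (t ^ r) ^ (q ^ k + 1) = t ^ (q ^ n + 1) := by
    rw [← pow_mul, hr, Nat.div_mul_cancel (pow_add_one_dvd_pow_add_one q hkn hn)]
  rw [hX₀, hY₀, ← t_pow]
  exact sq_eq_cube_sub_of_orthogonal (φ ^ k) hφk four_dvd h1 h2 h3 (t ^ r)

end Orthogonal

theorem stmt10 (Fq : Type*) [Field Fq] [Fintype Fq]
    (hq4 : Fintype.card Fq % 4 = 3)
    (n k : ℕ) (hnodd : Odd n) (hn : 0 < n) (hk : 0 < k) (hkn : k ∣ n)
    (r : ℕ) (hr : r = (Fintype.card Fq ^ n + 1) / (Fintype.card Fq ^ k + 1))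
    (a b c d : Fq)
    (h1 : a ^ 2 + c ^ 2 = 1) (h2 : b ^ 2 + d ^ 2 = 1) (h3 : a * b + c * d = 0)
    (X₀ Y₀ : Polynomial Fq)
    (hX₀ : X₀ = -(C c * X ^ r + C d) ^ ((Fintype.card Fq ^ k + 1) / 2))
    (hY₀ : Y₀ = (C a * X ^ r + C b) ^ ((Fintype.card Fq ^ k + 1) / 2)
        * (C c * X ^ r + C d) ^ ((Fintype.card Fq ^ k + 1) / 4)) :
    Y₀ ^ 2 = X₀ ^ 3 - (X ^ (Fintype.card Fq ^ n + 1) + 1) * X₀ :=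
  stmt10_general (FiniteField.frobeniusAlgHom Fq Fq[X]) (fun _ => rfl) hq4 hnodd hkn h1 h2 h3 X hr
    hX₀ hY₀
end

section
/- Let q be a prime power with q ≡ 3 (mod 4) and let m be a positive divisor of q + 1. Then for every positive integer N there exists a positive integer n with the following property: letting K_n = 𝔽_q(t)[s]/(s² − (t^{q^n} − t)) (a field, the function field of the hyperelliptic curve s² = t^{q^n} − t) and letting 𝒪_n be the integral closure of 𝔽_q[t] in K_n, the ideal class group Cl(𝒪_n) contains a subgroup isomorphic to (ℤ/mℤ)^N; that is, there is an injective group homomorphism (ℤ/mℤ)^N → Cl(𝒪_n). In other words, the m-class rank of K_n is arbitrarily large as n varies. -/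
/-!
Let `n` be even, let `κ` be an algebraic closure of `𝔽_q`, and let `c ∈ κ` be nonzero with
`c ^ (q ^ n) = c`. For `b = c ^ 2` the additive polynomial
`W_b = -b t + (b t) ^ q - ⋯ + (b t) ^ (q ^ (n - 1))` satisfies
`W_b ^ q + W_b = b (t ^ (q ^ n) - t)`, so that `y = W_b + 1 / 2` satisfies
`y ^ q + y - 1 = (c s) ^ 2` on the curve `s ^ 2 = t ^ (q ^ n) - t`. Hence
`α_c = y ^ ((q + 1) / 2) - c s` has norm `(y - 1) ^ (q + 1)`. It divides `(1 - c s) ^ (q + 1)`,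
and `1 - c s`, `1 - d s` are coprime for `c ≠ d`; therefore `α_c` is coprime to its conjugate
`α_{-c}`, and `(α_c)` is the `(q + 1)`-th power of an ideal.

Suppose that a product of powers of several `α_c` is an `m`-th power, where `m ∣ q + 1`.
Multiplying together its translates by `t ↦ t + a T`, `a ∈ 𝔽_q`, for a root `T` of some `W_b`,
turns `α_c` into `α_c ^ q` if `W_{c ^ 2}(T) = 0` and into `(1 - c s) ^ (q + 1)`, an `m`-th power,
otherwise. As `q` is prime to `m`, the factors with `W_{c ^ 2}(T) ≠ 0` can be dropped. The root
sets of `W_b` and `W_d` are distinct unless `b ^ (q - 1) = d ^ (q - 1)`, so this isolates one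
factor, and `α_c` is not a proper power because the norm of a function involving `s` has degree at
least `q ^ n`.

To descend to `𝔽_q`, multiply `α_c` over the Frobenius orbit of `c`. Choosing elements `c` for
which the orbits of `c` and of `(c ^ 2) ^ (q - 1)` both have length `2 ^ (j + 2)`, for
`j = 0, …, N - 1`, keeps all the factors independent. The units over `𝔽_q` are constants, and
these become `m`-th powers over `κ`, so the resulting ideal classes generate a group isomorphic to
`(ℤ/mℤ) ^ N`.
-/

open Polynomial

section QuadraticAlgebraMap

variable {S R R' : Type*} [CommRing S] [CommRing R] [CommRing R'] [Algebra S R] [Algebra S R']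
  {a b : R} {a' b' : R'}

/-- The homomorphism `R[ω] → R'[ω]` of quadratic algebras which is `g` on coefficients and fixes
`ω`. The parameters of the target are free, so that `R'[ω]` may be `R[ω]` itself. -/
def quadraticAlgebraMap (g : R →ₐ[S] R') (ha : g a = a') (hb : g b = b') :
    QuadraticAlgebra R a b →ₐ[S] QuadraticAlgebra R' a' b' :=
  AlgHom.ofLinearMap
    { toFun := fun z ↦ ⟨g z.re, g z.im⟩
      map_add' := fun _ _ ↦ by ext <;> simp
      map_smul' := fun _ _ ↦ by ext <;> simp }
    (QuadraticAlgebra.ext (map_one g) (map_zero g)) (fun _ _ ↦ by ext <;> simp [ha, hb])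

@[simp]
theorem re_quadraticAlgebraMap (g : R →ₐ[S] R') (ha : g a = a') (hb : g b = b')
    (z : QuadraticAlgebra R a b) : (quadraticAlgebraMap g ha hb z).re = g z.re := rfl

@[simp]
theorem im_quadraticAlgebraMap (g : R →ₐ[S] R') (ha : g a = a') (hb : g b = b')
    (z : QuadraticAlgebra R a b) : (quadraticAlgebraMap g ha hb z).im = g z.im := rfl

@[simp]
theorem quadraticAlgebraMap_algebraMap (g : R →ₐ[S] R') (ha : g a = a') (hb : g b = b') (r : R) :
    quadraticAlgebraMap g ha hb (algebraMap R _ r) = algebraMap R' _ (g r) := by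
  ext <;> simp

@[simp]
theorem quadraticAlgebraMap_omega (g : R →ₐ[S] R') (ha : g a = a') (hb : g b = b') :
    quadraticAlgebraMap g ha hb QuadraticAlgebra.omega = QuadraticAlgebra.omega := by
  ext <;> simp

theorem quadraticAlgebraMap_injective (g : R →ₐ[S] R') (ha : g a = a') (hb : g b = b')
    (hg : Function.Injective g) : Function.Injective (quadraticAlgebraMap g ha hb) :=
  fun _ _ h ↦ QuadraticAlgebra.ext (hg (congrArg QuadraticAlgebra.re h))
    (hg (congrArg QuadraticAlgebra.im h))

theorem trace_quadraticAlgebraMap (g : R →ₐ[S] R') (ha : g a = a') (hb : g b = b')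
    (z : QuadraticAlgebra R a b) : (quadraticAlgebraMap g ha hb z).trace = g z.trace := by
  simp [QuadraticAlgebra.trace_def, hb, map_ofNat]

theorem norm_quadraticAlgebraMap (g : R →ₐ[S] R') (ha : g a = a') (hb : g b = b')
    (z : QuadraticAlgebra R a b) : (quadraticAlgebraMap g ha hb z).norm = g z.norm := by
  simp [QuadraticAlgebra.norm_def, ha, hb]

theorem isCoprime_star_iff {z : QuadraticAlgebra R a b} :
    IsCoprime z (star z) ↔ IsCoprime z.trace z.norm := by
  constructor
  · intro h
    have hsum : IsCoprime (z + star z) (z * star z) :=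
      .mul_right (by simpa [add_comm] using h.symm.add_mul_left_left 1)
        (by simpa using h.add_mul_left_left 1)
    rw [← QuadraticAlgebra.algebraMap_trace_eq_add_star,
      ← QuadraticAlgebra.algebraMap_norm_eq_mul_star] at hsum
    obtain ⟨x, y, hxy⟩ := hsum
    exact ⟨x.re, y.re, by
      simpa [QuadraticAlgebra.re_one] using congrArg QuadraticAlgebra.re hxy⟩
  · rintro ⟨x, y, hxy⟩
    have := congrArg (algebraMap R (QuadraticAlgebra R a b)) hxy
    rw [map_add, map_mul, map_mul, QuadraticAlgebra.algebraMap_trace_eq_add_star,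
      QuadraticAlgebra.algebraMap_norm_eq_mul_star, map_one] at this
    exact ⟨algebraMap R _ x + algebraMap R _ y * star z, algebraMap R _ x, by
      linear_combination this⟩

end QuadraticAlgebraMap

section IntegralClosure

variable {A K L : Type*} [CommRing A] [IsDomain A] [UniqueFactorizationMonoid A]
  [Field K] [Algebra A K] [IsFractionRing A K] {f : A}

theorem mem_range_algebraMap_of_squarefree_mul_sq (hf : Squarefree f) {x : K}
    (h : algebraMap A K f * x ^ 2 ∈ (algebraMap A K).range) : x ∈ (algebraMap A K).range := by
  obtain ⟨c, hc⟩ := h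
  obtain ⟨a, d, hrel, rfl⟩ := IsFractionRing.exists_reduced_fraction A x
  have hd : algebraMap A K d ≠ 0 := by simp
  rw [IsFractionRing.mk'_eq_div] at hc ⊢
  have hdvd : (d : A) ^ 2 ∣ f * a ^ 2 := by
    refine ⟨c, IsFractionRing.injective A K ?_⟩
    rw [map_mul, map_mul, map_pow, map_pow, hc, div_pow]
    field_simp
  have hunit : IsUnit (d : A) :=
    hf d (by rw [← sq]; exact hrel.symm.pow.dvd_of_dvd_mul_right hdvd)
  obtain ⟨e, he⟩ := hunit.exists_right_inv
  refine ⟨a * e, ?_⟩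
  rw [eq_div_iff hd, ← map_mul, mul_assoc, mul_comm e, he, mul_one]

theorem sq_ne_algebraMap_of_squarefree (hf : Squarefree f) (hu : ¬IsUnit f) (x : K) :
    x ^ 2 ≠ algebraMap A K f := by
  intro h
  obtain ⟨a, rfl⟩ := (IsIntegrallyClosed.isIntegral_iff (R := A)).mp
    (IsIntegral.of_pow two_pos (h ▸ isIntegral_algebraMap))
  rw [← map_pow] at h
  have hfa : a * a = f := by rw [← sq, IsFractionRing.injective A K h]
  exact hu (hfa ▸ (hf a hfa.dvd).mul (hf a hfa.dvd))

theorem mem_range_quadraticAlgebraMap_of_isIntegral (hf : Squarefree f) (h2 : IsUnit (2 : A))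
    {z : QuadraticAlgebra K (algebraMap A K f) 0} (hz : IsIntegral A z) :
    z ∈ (quadraticAlgebraMap (a := f) (b := 0) (Algebra.ofId A K) rfl (map_zero _)).range := by
  let conj : QuadraticAlgebra K (algebraMap A K f) 0 →ₐ[A]
      QuadraticAlgebra K (algebraMap A K f) 0 :=
    { starRingEnd _ with
      commutes' := fun a ↦ by
        change star (algebraMap K _ (algebraMap A K a)) = algebraMap K _ (algebraMap A K a)
        ext <;> simp }
  have mem_range_of_isIntegral {x : K}
      (hx : IsIntegral A (algebraMap K (QuadraticAlgebra K (algebraMap A K f) 0) x)) :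
      x ∈ (algebraMap A K).range :=
    IsIntegrallyClosed.isIntegral_iff.mp
      ((isIntegral_algebraMap_iff QuadraticAlgebra.algebraMap_injective).mp hx)
  have htrace := mem_range_of_isIntegral
    (QuadraticAlgebra.algebraMap_trace_eq_add_star z ▸ hz.add (hz.map conj))
  have hnorm := mem_range_of_isIntegral
    (QuadraticAlgebra.algebraMap_norm_eq_mul_star z ▸ hz.mul (hz.map conj))
  obtain ⟨i, hi⟩ := h2.exists_left_inv
  have hre : z.re ∈ (algebraMap A K).range := by
    have : z.re = algebraMap A K i * z.trace := by
      rw [QuadraticAlgebra.trace_def, zero_mul, add_zero, ← mul_assoc,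
        ← map_ofNat (algebraMap A K) 2, ← map_mul, hi, map_one, one_mul]
    exact this ▸ mul_mem ⟨i, rfl⟩ htrace
  have him : z.im ∈ (algebraMap A K).range := by
    apply mem_range_algebraMap_of_squarefree_mul_sq hf
    have : algebraMap A K f * z.im ^ 2 = z.re ^ 2 - z.norm := by
      rw [QuadraticAlgebra.norm_def]; ring
    exact this ▸ sub_mem (pow_mem hre 2) hnorm
  obtain ⟨⟨r, hr⟩, ⟨j, hj⟩⟩ := hre, him
  exact ⟨⟨r, j⟩, QuadraticAlgebra.ext hr hj⟩

theorem nonempty_quadraticAlgebra_algEquiv_integralClosure [Field L] [Algebra A L] [Algebra K L]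
    [IsScalarTower A K L] (hf : Squarefree f) (hu : ¬IsUnit f) (h2 : IsUnit (2 : A)) {s : L}
    (hs : s ^ 2 = algebraMap A L f) (hL : Algebra.adjoin K {s} = ⊤) :
    Nonempty (QuadraticAlgebra A f 0 ≃ₐ[A] integralClosure A L) := by
  let M := QuadraticAlgebra K (algebraMap A K f) 0
  have : Fact (∀ r : K, r ^ 2 ≠ algebraMap A K f + 0 * r) :=
    ⟨fun r ↦ by simpa using sq_ne_algebraMap_of_squarefree hf hu r⟩
  let ι : QuadraticAlgebra A f 0 →ₐ[A] M :=
    quadraticAlgebraMap (Algebra.ofId A K) rfl (map_zero _)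
  have hι : Function.Injective ι :=
    quadraticAlgebraMap_injective _ _ _ (IsFractionRing.injective A K)
  let toL : M →ₐ[K] L := QuadraticAlgebra.lift ⟨s, by
    rw [← sq, hs, zero_smul, add_zero, ← Algebra.algebraMap_eq_smul_one,
      ← IsScalarTower.algebraMap_apply]⟩
  have hsurj : Function.Surjective toL := by
    rw [← AlgHom.range_eq_top, eq_top_iff, ← hL, Algebra.adjoin_le_iff, Set.singleton_subset_iff]
    exact ⟨QuadraticAlgebra.omega, congrArg Subtype.val (QuadraticAlgebra.lift.symm_apply_apply _)⟩
  let ψ : QuadraticAlgebra A f 0 →ₐ[A] L := (toL.restrictScalars A).comp ι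
  have hψ (z) : ψ z ∈ integralClosure A L := (Algebra.IsIntegral.isIntegral z).map ψ
  refine ⟨AlgEquiv.ofBijective (ψ.codRestrict _ hψ) ⟨?_, fun ⟨x, hx⟩ ↦ ?_⟩⟩
  · exact fun z w h ↦ hι (toL.toRingHom.injective (congrArg Subtype.val h))
  · obtain ⟨z, rfl⟩ := hsurj x
    have hz : IsIntegral A z :=
      (isIntegral_algHom_iff (toL.restrictScalars A) toL.toRingHom.injective).mp hx
    obtain ⟨w, rfl⟩ := mem_range_quadraticAlgebraMap_of_isIntegral hf h2 hz
    exact ⟨w, Subtype.ext rfl⟩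

theorem isDedekindDomain_quadraticAlgebra {A : Type*} [CommRing A] [IsDomain A]
    [IsPrincipalIdealRing A] {f : A} (hf : Squarefree f) (hu : ¬IsUnit f) (h2 : IsUnit (2 : A)) :
    IsDedekindDomain (QuadraticAlgebra A f 0) := by
  let K := FractionRing A
  let M := QuadraticAlgebra K (algebraMap A K f) 0
  have : Fact (∀ r : K, r ^ 2 ≠ algebraMap A K f + 0 * r) :=
    ⟨fun r ↦ by simpa using sq_ne_algebraMap_of_squarefree hf hu r⟩
  have hω : (QuadraticAlgebra.omega : M) ^ 2 = algebraMap A M f := by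
    rw [sq, QuadraticAlgebra.omega_mul_omega_eq_mk]
    rfl
  have hadjoin : Algebra.adjoin K {(QuadraticAlgebra.omega : M)} = ⊤ := by
    refine eq_top_iff.mpr fun z _ ↦ ?_
    rw [← QuadraticAlgebra.mk_eta z, QuadraticAlgebra.mk_eq_add_smul_omega]
    exact add_mem (algebraMap_mem _ _)
      (Subalgebra.smul_mem _ (Algebra.self_mem_adjoin_singleton K _) _)
  obtain ⟨e⟩ := nonempty_quadraticAlgebra_algEquiv_integralClosure (K := K) hf hu h2 hω hadjoin
  have := integralClosure.isIntegrallyClosedOfFiniteExtension (R := A) (L := M) K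
  have : IsDomain (QuadraticAlgebra A f 0) := e.toRingEquiv.toMulEquiv.isDomain _
  have := IsIntegrallyClosed.of_equiv e.symm.toRingEquiv
  have : IsNoetherianRing (QuadraticAlgebra A f 0) := IsNoetherianRing.of_finite A _
  have : Ring.DimensionLEOne (QuadraticAlgebra A f 0) := .of_isIntegral A _
  exact {}

end IntegralClosure

section Norm

variable {κ : Type*} [Field κ] {f : κ[X]}

theorem natDegree_le_natDegree_norm (hf : Odd f.natDegree) {z : QuadraticAlgebra κ[X] f 0}
    (hz : z.im ≠ 0) : f.natDegree ≤ z.norm.natDegree := by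
  have hf0 : f ≠ 0 := by rintro rfl; simp at hf
  have hre : (z.re * z.re).natDegree = 2 * z.re.natDegree := by rw [← sq, natDegree_pow]
  have him : (f * z.im * z.im).natDegree = f.natDegree + 2 * z.im.natDegree := by
    rw [mul_assoc, ← sq, natDegree_mul hf0 (pow_ne_zero 2 hz), natDegree_pow]
  rw [show z.norm = z.re * z.re - f * z.im * z.im by simp [QuadraticAlgebra.norm_def]]
  -- The two terms have degrees of different parity, so their leading terms cannot cancel.
  rcases lt_trichotomy (z.re * z.re).natDegree (f * z.im * z.im).natDegree with h | h | h
  · rw [natDegree_sub_eq_right_of_natDegree_lt h]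
    lia
  · obtain ⟨k, hk⟩ := hf
    lia
  · rw [natDegree_sub_eq_left_of_natDegree_lt h]
    lia

theorem exists_eq_algebraMap_C_of_isUnit (hf : Odd f.natDegree) {u : QuadraticAlgebra κ[X] f 0}
    (hu : IsUnit u) : ∃ a : κ, u = algebraMap κ[X] _ (C a) := by
  have hnorm := QuadraticAlgebra.isUnit_iff_norm_isUnit.mp hu
  have him : u.im = 0 := by
    by_contra h
    have := natDegree_le_natDegree_norm hf h
    rw [natDegree_eq_zero_of_isUnit hnorm] at this
    exact hf.pos.ne' (Nat.le_zero.mp this)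
  have hre : IsUnit u.re := by
    rw [QuadraticAlgebra.norm_def, him] at hnorm
    simpa using hnorm
  obtain ⟨a, -, ha⟩ := Polynomial.isUnit_iff.mp hre
  exact ⟨a, QuadraticAlgebra.ext ha.symm him⟩

end Norm

section FrobeniusIdentities

variable (Fq : Type*) [Field Fq] [Fintype Fq] {A B : Type*} [CommRing A] [Algebra Fq A]
  [CommRing B] [Algebra Fq B]

local notation "q" => Fintype.card Fq

theorem add_pow_card_of_algebra (x y : A) : (x + y) ^ q = x ^ q + y ^ q :=
  map_add (FiniteField.frobeniusAlgHom Fq A) x y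

theorem sub_pow_card_of_algebra (x y : A) : (x - y) ^ q = x ^ q - y ^ q :=
  map_sub (FiniteField.frobeniusAlgHom Fq A) x y

theorem add_pow_card_pow_of_algebra (n : ℕ) (x y : A) :
    (x + y) ^ (q ^ n) = x ^ (q ^ n) + y ^ (q ^ n) := by
  simpa [FiniteField.coe_frobeniusAlgHom, pow_iterate] using
    map_add (FiniteField.frobeniusAlgHom Fq A ^ n) x y

/-- The alternating trace `x ↦ -x + x ^ q - x ^ (q ^ 2) + ⋯ + (-1) ^ n * x ^ (q ^ (n - 1))`, an
inverse of `w ↦ w ^ q + w` up to `x ↦ x ^ (q ^ n) - x` when `n` is even. -/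
noncomputable def twistedTrace (A : Type*) [CommRing A] [Algebra Fq A] (n : ℕ) :
    Module.End Fq A :=
  ∑ i ∈ Finset.range n, (-1 : Fq) ^ (i + 1) • (FiniteField.frobeniusAlgHom Fq A).toLinearMap ^ i

theorem twistedTrace_apply (n : ℕ) (x : A) :
    twistedTrace Fq A n x = ∑ i ∈ Finset.range n, (-1 : Fq) ^ (i + 1) • x ^ (q ^ i) := by
  simp [twistedTrace, Module.End.pow_apply, FiniteField.coe_frobeniusAlgHom, pow_iterate]

theorem map_twistedTrace (g : A →ₐ[Fq] B) (n : ℕ) (x : A) :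
    g (twistedTrace Fq A n x) = twistedTrace Fq B n (g x) := by
  simp [twistedTrace_apply]

theorem twistedTrace_pow_card_add {n : ℕ} (hn : Even n) (x : A) :
    twistedTrace Fq A n x ^ q + twistedTrace Fq A n x = x ^ (q ^ n) - x := by
  have hfrob : twistedTrace Fq A n x ^ q =
      ∑ i ∈ Finset.range n, (-1 : Fq) ^ (i + 1) • x ^ (q ^ (i + 1)) := by
    simp only [twistedTrace_apply, ← FiniteField.frobeniusAlgHom_apply Fq A, map_sum, map_smul]
    simp only [FiniteField.frobeniusAlgHom_apply, pow_succ, pow_mul]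
  have hterm (i : ℕ) : (-1 : Fq) ^ (i + 1) • x ^ (q ^ (i + 1)) + (-1 : Fq) ^ (i + 1) • x ^ (q ^ i) =
      (-1 : Fq) ^ (i + 1) • x ^ (q ^ (i + 1)) - (-1 : Fq) ^ i • x ^ (q ^ i) := by
    rw [pow_succ (-1 : Fq) i, mul_neg_one, neg_smul, neg_smul, sub_eq_add_neg]
  rw [hfrob, twistedTrace_apply, ← Finset.sum_add_distrib, Finset.sum_congr rfl fun i _ ↦ hterm i,
    Finset.sum_range_sub (fun i ↦ (-1 : Fq) ^ i • x ^ (q ^ i)), hn.neg_one_pow]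
  simp

theorem prod_add_algebraMap (x : A) : ∏ a : Fq, (x + algebraMap Fq A a) = x ^ q - x := by
  have hpoly : ∏ a : Fq, (X - C a) = (X ^ q - X : Fq[X]) := by
    have := prod_multiset_X_sub_C_of_monic_of_roots_card_eq
      (monic_X_pow_sub (R := Fq) (p := X) (n := q) (by simpa using Fintype.one_lt_card))
      (by rw [FiniteField.roots_X_pow_card_sub_X,
        FiniteField.X_pow_card_sub_X_natDegree_eq _ Fintype.one_lt_card]; rfl)
    rwa [FiniteField.roots_X_pow_card_sub_X] at this
  have := congrArg (aeval x) hpoly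
  rw [map_prod, map_sub, map_pow, aeval_X] at this
  rw [← this]
  exact Fintype.prod_equiv (Equiv.neg Fq) _ _ fun a ↦ by simp

theorem prod_add_algebraMap_mul {E : Type*} [Field E] [Algebra Fq E] (x : E) {u : E}
    (hu0 : u ≠ 0) (hu : u ^ q = -u) : ∏ a : Fq, (x + algebraMap Fq E a * u) = x ^ q + x := by
  have hfactor (a : Fq) : x + algebraMap Fq E a * u = u * (x / u + algebraMap Fq E a) := by
    field_simp
  simp only [hfactor, Finset.prod_mul_distrib, prod_add_algebraMap, Finset.prod_const,
    Finset.card_univ, div_pow, hu]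
  field_simp
  ring

variable {Fq}

theorem pow_half_sub_mul_pow_half_add (hq : Odd q) {y v : A} (hv : v ^ 2 = y ^ q + y - 1) :
    (y ^ ((q + 1) / 2) - v) * (y ^ ((q + 1) / 2) + v) = (y - 1) ^ (q + 1) := by
  have hhalf : y ^ (q + 1) = (y ^ ((q + 1) / 2)) ^ 2 := by
    rw [← pow_mul, Nat.div_mul_cancel hq.add_one.two_dvd]
  rw [pow_succ (y - 1), sub_pow_card_of_algebra, one_pow]
  linear_combination -hv - hhalf

theorem pow_half_sub_dvd_one_sub_pow (hq : Odd q) {y v : A} (hv : v ^ 2 = y ^ q + y - 1) :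
    y ^ ((q + 1) / 2) - v ∣ (1 - v) ^ (q + 1) := by
  -- Modulo `α = y ^ h - v`, the base `1 - v` is `1 - y ^ h`, a multiple of `1 - y`,
  -- and `α` divides `(1 - y) ^ (q + 1)`.
  have hdvd : y ^ ((q + 1) / 2) - v ∣ (1 - y ^ ((q + 1) / 2)) ^ (q + 1) := by
    have h1 : y ^ ((q + 1) / 2) - v ∣ (1 - y) ^ (q + 1) := by
      rw [← neg_sub y 1, hq.add_one.neg_pow, ← pow_half_sub_mul_pow_half_add hq hv]
      exact dvd_mul_right _ _
    exact h1.trans (pow_dvd_pow_of_dvd (one_sub_dvd_one_sub_pow y _) _)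
  have h2 := sub_dvd_pow_sub_pow (1 - v) (1 - y ^ ((q + 1) / 2)) (q + 1)
  rw [sub_sub_sub_cancel_left] at h2
  exact (dvd_sub_left hdvd).mp h2

theorem prod_pow_half_sub_of_isAlgClosed {E : Type*} [Field E] [IsAlgClosed E] [Algebra Fq E]
    (hq : Odd q) {y v u : E} (hv : v ^ 2 = y ^ q + y - 1) (hu0 : u ≠ 0) (hu : u ^ q = -u) :
    ∏ a : Fq, ((y + algebraMap Fq E a * u) ^ ((q + 1) / 2) - v) = (1 - v) ^ (q + 1) := by
  have hhalf : (q + 1) / 2 * 2 = q + 1 := Nat.div_mul_cancel hq.add_one.two_dvd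
  let P : E[X] := X ^ ((q + 1) / 2) - C v
  have hP (x : E) : x ^ ((q + 1) / 2) - v = (P.roots.map (x - ·)).prod := by
    have := (IsAlgClosed.splits P).eval_eq_prod_roots_of_monic
      (monic_X_pow_sub_C v (by lia)) x
    simpa [P] using this
  have hroot (z : E) (hz : z ∈ P.roots) :
      ∏ a : Fq, (y + algebraMap Fq E a * u - z) = (1 - z) ^ (q + 1) := by
    have hzv : z ^ (q + 1) = y ^ q + y - 1 := by
      have : z ^ ((q + 1) / 2) = v := by
        simpa [P, sub_eq_zero] using isRoot_of_mem_roots hz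
      rw [← hhalf, pow_mul, this, hv]
    simp only [add_sub_right_comm y _ z]
    rw [prod_add_algebraMap_mul Fq _ hu0 hu, pow_succ, sub_pow_card_of_algebra,
      sub_pow_card_of_algebra, one_pow]
    linear_combination -hzv
  calc ∏ a : Fq, ((y + algebraMap Fq E a * u) ^ ((q + 1) / 2) - v)
      = (P.roots.map fun z ↦ ∏ a : Fq, (y + algebraMap Fq E a * u - z)).prod := by
        simp only [hP]
        rw [← Multiset.prod_map_prod]
    _ = (P.roots.map fun z ↦ (1 - z) ^ (q + 1)).prod := by
        rw [Multiset.map_congr rfl hroot]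
    _ = (1 - v) ^ (q + 1) := by
        rw [Multiset.prod_map_pow, ← hP, one_pow]

theorem prod_pow_half_sub [IsDomain A] (hq : Odd q) {y v u : A} (hv : v ^ 2 = y ^ q + y - 1)
    (hu0 : u ≠ 0) (hu : u ^ q = -u) :
    ∏ a : Fq, ((y + algebraMap Fq A a * u) ^ ((q + 1) / 2) - v) = (1 - v) ^ (q + 1) := by
  let E := AlgebraicClosure (FractionRing A)
  have hinj : Function.Injective (algebraMap A E) := by
    rw [IsScalarTower.algebraMap_eq A (FractionRing A) E]
    exact (algebraMap (FractionRing A) E).injective.comp (IsFractionRing.injective A _)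
  apply hinj
  have := prod_pow_half_sub_of_isAlgClosed hq (y := algebraMap A E y) (v := algebraMap A E v)
    (u := algebraMap A E u) (by simpa using congrArg (algebraMap A E) hv)
    ((map_ne_zero_iff _ hinj).mpr hu0) (by rw [← map_pow, hu, map_neg])
  simpa [← IsScalarTower.algebraMap_apply] using this

end FrobeniusIdentities

section Powers

variable {R : Type*} [CommRing R] [IsDomain R]

theorem exists_pow_eq_of_coprime_of_pow_eq_pow [IsIntegrallyClosed R] {a b : R} {k m : ℕ}
    (hkm : k.Coprime m) (hm : m ≠ 0) (h : a ^ k = b ^ m) : ∃ c, c ^ m = a := by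
  let K := FractionRing R
  obtain ⟨x, hx⟩ : algebraMap R K a ∈ Set.range (· ^ m : K → K) :=
    (pow_mem_range_pow_of_coprime hkm _).mp
      ⟨algebraMap R K b, by simpa using congrArg (algebraMap R K) h.symm⟩
  obtain ⟨c, rfl⟩ := IsIntegrallyClosed.exists_algebraMap_eq_of_isIntegral_pow
    (Nat.pos_of_ne_zero hm) (x := x) ((show x ^ m = _ from hx) ▸ isIntegral_algebraMap)
  exact ⟨c, IsFractionRing.injective R K (by simpa using hx)⟩

theorem exists_eq_algebraMap_mul_of_pow_eq_pow {κ : Type*} [Field κ] [IsAlgClosed κ]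
    [Algebra κ R] {x y : R} {g : ℕ} (hg : g ≠ 0)
    (h : x ^ g = y ^ g) : ∃ ζ : κ, x = algebraMap κ R ζ * y := by
  by_cases hy : y = 0
  · exact ⟨0, by rw [map_zero, zero_mul, ← pow_eq_zero_iff hg, h, hy, zero_pow hg]⟩
  let K := FractionRing R
  have hy' : algebraMap R K y ≠ 0 := by simpa using hy
  have hroot : (algebraMap R K x / algebraMap R K y) ^ g = 1 := by
    rw [div_pow, ← map_pow, ← map_pow, h, map_pow, div_self (pow_ne_zero g hy')]
  obtain ⟨ζ, hζ⟩ := (IsAlgClosed.splits (X ^ g - 1 : κ[X])).mem_range_of_isRoot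
    (i := algebraMap κ K) (X_pow_sub_C_ne_zero (Nat.pos_of_ne_zero hg) 1)
    (x := algebraMap R K x / algebraMap R K y) (by simp [hroot])
  refine ⟨ζ, IsFractionRing.injective R K ?_⟩
  rw [map_mul, ← IsScalarTower.algebraMap_apply, hζ, div_mul_cancel₀ _ hy']

theorem exists_pow_div_gcd_eq_of_pow_eq_pow (κ : Type*) [Field κ] [IsAlgClosed κ] [Algebra κ R]
    [IsIntegrallyClosed R] {a b : R} {k m : ℕ} (hm : m ≠ 0) (h : a ^ k = b ^ m) :
    ∃ c, c ^ (m / k.gcd m) = a := by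
  obtain ⟨k', m', hcop, hk, hm'⟩ := Nat.exists_coprime k m
  have hg : k.gcd m ≠ 0 := Nat.gcd_ne_zero_right hm
  have hm'0 : m' ≠ 0 := fun h ↦ hm (by rw [hm', h, zero_mul])
  have hdiv : m / k.gcd m = m' := Nat.div_eq_of_eq_mul_left (Nat.pos_of_ne_zero hg) hm'
  obtain ⟨ζ, hζ⟩ := exists_eq_algebraMap_mul_of_pow_eq_pow (κ := κ) hg
    (show (a ^ k') ^ k.gcd m = (b ^ m') ^ k.gcd m by rw [← pow_mul, ← hk, ← pow_mul, ← hm', h])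
  obtain ⟨η, rfl⟩ := IsAlgClosed.exists_pow_nat_eq ζ (Nat.pos_of_ne_zero hm'0)
  rw [map_pow, ← mul_pow] at hζ
  exact hdiv ▸ exists_pow_eq_of_coprime_of_pow_eq_pow hcop hm'0 hζ

end Powers

theorem isCoprime_one_sub_smul {κ A : Type*} [Field κ] [CommRing A] [Algebra κ A] {c d : κ}
    (h : c ≠ d) (x : A) : IsCoprime (1 - c • x) (1 - d • x) := by
  have hcd := congrArg (algebraMap κ A) (inv_mul_cancel₀ (sub_ne_zero.mpr h.symm))
  rw [map_mul, map_sub, map_one] at hcd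
  refine ⟨algebraMap κ A ((d - c)⁻¹ * d), -algebraMap κ A ((d - c)⁻¹ * c), ?_⟩
  simp only [Algebra.smul_def, map_mul]
  linear_combination hcd

section AdditivePolynomial

variable (Fq : Type*) [Field Fq] [Fintype Fq] {κ : Type*} [Field κ] [Algebra Fq κ] {n : ℕ}

local notation "q" => Fintype.card Fq

/-- The additive polynomial `W_b = -bX + (bX) ^ q - ⋯ ± (bX) ^ (q ^ (n - 1))`. If `n` is even and
`b ^ (q ^ n) = b`, it solves `W ^ q + W = b * (X ^ (q ^ n) - X)`. -/
noncomputable def additivePoly (n : ℕ) (b : κ) : κ[X] :=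
  twistedTrace Fq κ[X] n (C b * X)

theorem additivePoly_eq_sum (n : ℕ) (b : κ) : additivePoly Fq n b =
    ∑ i ∈ Finset.range n, C ((-1) ^ (i + 1) * b ^ (q ^ i)) * X ^ (q ^ i) := by
  simp [additivePoly, twistedTrace_apply, mul_pow, mul_assoc, Algebra.smul_def]

theorem eval_additivePoly (b T : κ) :
    (additivePoly Fq n b).eval T = twistedTrace Fq κ n (b * T) := by
  have := map_twistedTrace Fq ((aeval (R := κ) T).restrictScalars Fq) n (C b * X)
  simpa [additivePoly, coe_aeval_eq_eval] using this

theorem eval_algebraMap_mul_additivePoly (b T : κ) (a : Fq) :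
    (additivePoly Fq n b).eval (algebraMap Fq κ a * T) =
      algebraMap Fq κ a * (additivePoly Fq n b).eval T := by
  rw [eval_additivePoly, eval_additivePoly, mul_left_comm, ← Algebra.smul_def, map_smul,
    Algebra.smul_def]

theorem taylor_additivePoly (b T : κ) : taylor T (additivePoly Fq n b) =
    additivePoly Fq n b + C ((additivePoly Fq n b).eval T) := by
  have htaylor : taylor T (twistedTrace Fq κ[X] n (C b * X)) =
      twistedTrace Fq κ[X] n (taylor T (C b * X)) :=
    map_twistedTrace Fq ((taylorAlgHom T).restrictScalars Fq) n (C b * X)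
  have hC : C (twistedTrace Fq κ n (b * T)) = twistedTrace Fq κ[X] n (C (b * T)) :=
    map_twistedTrace Fq ((CAlgHom (R := κ) (A := κ)).restrictScalars Fq) n (b * T)
  rw [eval_additivePoly, hC, additivePoly, htaylor, ← map_add, taylor_mul, taylor_C, taylor_X,
    mul_add, C_mul]

theorem map_additivePoly {κ' : Type*} [Field κ'] [Algebra Fq κ'] (g : κ →ₐ[Fq] κ') (b : κ) :
    (additivePoly Fq n b).map g = additivePoly Fq n (g b) := by
  have := map_twistedTrace Fq (mapAlgHom g) n (C b * X)
  simpa [additivePoly, coe_mapAlgHom] using this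

theorem additivePoly_pow_card_add (hn : Even n) {b : κ} (hb : b ^ (q ^ n) = b) :
    additivePoly Fq n b ^ q + additivePoly Fq n b = C b * (X ^ (q ^ n) - X) := by
  rw [additivePoly, twistedTrace_pow_card_add Fq hn, mul_pow, ← C_pow, hb, mul_sub]

theorem eval_additivePoly_pow_card_add (hn : Even n) {b : κ} (hb : b ^ (q ^ n) = b) (T : κ) :
    (additivePoly Fq n b).eval T ^ q + (additivePoly Fq n b).eval T = b * (T ^ (q ^ n) - T) := by
  simpa using congrArg (eval T) (additivePoly_pow_card_add Fq hn hb)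

theorem pow_card_pow_eq_self_of_eval_additivePoly_eq_zero (hn : Even n) {b : κ}
    (hb : b ^ (q ^ n) = b) (hb0 : b ≠ 0) {T : κ} (hT : (additivePoly Fq n b).eval T = 0) :
    T ^ (q ^ n) = T := by
  have := eval_additivePoly_pow_card_add Fq hn hb T
  rw [hT, zero_pow Fintype.card_ne_zero, zero_add, eq_comm] at this
  exact sub_eq_zero.mp ((mul_eq_zero.mp this).resolve_left hb0)

theorem coeff_additivePoly_card_pow (b : κ) {j : ℕ} (hj : j < n) :
    (additivePoly Fq n b).coeff (q ^ j) = (-1) ^ (j + 1) * b ^ (q ^ j) := by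
  rw [additivePoly_eq_sum, finsetSum_coeff, Finset.sum_eq_single j]
  · rw [coeff_C_mul_X_pow, if_pos rfl]
  · intro i _ hij
    rw [coeff_C_mul_X_pow, if_neg]
    exact fun h ↦ hij (Nat.pow_right_injective Fintype.one_lt_card h).symm
  · exact fun h ↦ absurd (Finset.mem_range.mpr hj) h

theorem natDegree_additivePoly_le (b : κ) : (additivePoly Fq n b).natDegree ≤ q ^ (n - 1) := by
  rw [additivePoly_eq_sum]
  refine natDegree_sum_le_of_forall_le _ _ fun i hi ↦ (natDegree_C_mul_X_pow_le _ _).trans ?_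
  have := Finset.mem_range.mp hi
  exact Nat.pow_le_pow_right Fintype.card_pos (by lia)

theorem natDegree_additivePoly (hn : n ≠ 0) {b : κ} (hb : b ≠ 0) :
    (additivePoly Fq n b).natDegree = q ^ (n - 1) := by
  refine natDegree_eq_of_le_of_coeff_ne_zero (natDegree_additivePoly_le Fq b) ?_
  rw [coeff_additivePoly_card_pow Fq b (by lia)]
  simp [hb]

theorem additivePoly_ne_zero (hn : n ≠ 0) {b : κ} (hb : b ≠ 0) : additivePoly Fq n b ≠ 0 := by
  refine ne_zero_of_natDegree_gt (n := 0) ?_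
  rw [natDegree_additivePoly Fq hn hb]
  exact pow_pos Fintype.card_pos _

theorem natCast_card_pow_eq_zero {i : ℕ} (hi : i ≠ 0) : ((q ^ i : ℕ) : κ) = 0 := by
  rw [Nat.cast_pow, ← map_natCast (algebraMap Fq κ), Nat.cast_card_eq_zero, map_zero, zero_pow hi]

theorem derivative_additivePoly (hn : n ≠ 0) (b : κ) :
    derivative (additivePoly Fq n b) = -C b := by
  rw [additivePoly_eq_sum, derivative_sum, Finset.sum_eq_single 0]
  · rw [pow_zero, derivative_C_mul_X_pow]
    simp
  · intro i _ hi
    rw [derivative_C_mul_X_pow, natCast_card_pow_eq_zero Fq hi, mul_zero, C_0, zero_mul]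
  · exact fun h ↦ absurd (Finset.mem_range.mpr (Nat.pos_of_ne_zero hn)) h

theorem separable_additivePoly (hn : n ≠ 0) {b : κ} (hb : b ≠ 0) :
    (additivePoly Fq n b).Separable := by
  refine ⟨0, C (-b⁻¹), ?_⟩
  rw [derivative_additivePoly Fq hn, zero_mul, zero_add, ← C_neg, ← C_mul, neg_mul_neg,
    inv_mul_cancel₀ hb, C_1]

theorem pow_card_sub_one_eq_of_additivePoly_dvd (hn : 2 ≤ n) {b d : κ} (hb : b ≠ 0) (hd : d ≠ 0)
    (h : additivePoly Fq n b ∣ additivePoly Fq n d) : b ^ (q - 1) = d ^ (q - 1) := by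
  have hn0 : n ≠ 0 := by lia
  obtain ⟨r, hr⟩ : ∃ r, d = r * b ∧ d ^ q = r * b ^ q := by
    obtain ⟨k, hk⟩ := h
    have hk0 : k ≠ 0 := right_ne_zero_of_mul (hk ▸ additivePoly_ne_zero Fq hn0 hd)
    have hkdeg := congrArg natDegree hk
    rw [natDegree_mul (additivePoly_ne_zero Fq hn0 hb) hk0, natDegree_additivePoly Fq hn0 hb,
      natDegree_additivePoly Fq hn0 hd, left_eq_add] at hkdeg
    rw [eq_C_of_natDegree_eq_zero hkdeg] at hk
    have h0 := congrArg (coeff · (q ^ 0)) hk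
    have h1 := congrArg (coeff · (q ^ 1)) hk
    simp only [coeff_mul_C, coeff_additivePoly_card_pow Fq _ (show 0 < n by lia),
      coeff_additivePoly_card_pow Fq _ (show 1 < n by lia)] at h0 h1
    exact ⟨k.coeff 0, by linear_combination -h0, by linear_combination h1⟩
  have hq : q = q - 1 + 1 := (Nat.sub_add_cancel Fintype.card_pos).symm
  have h1 := hr.2
  rw [hq, pow_succ, pow_succ] at h1
  refine mul_right_cancel₀ hd ?_
  rw [h1, hr.1]
  ring

theorem exists_eval_additivePoly_eq_zero_and_ne_zero [IsAlgClosed κ] (hn : 2 ≤ n) {b d : κ}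
    (hb : b ≠ 0) (hd : d ≠ 0) (h : b ^ (q - 1) ≠ d ^ (q - 1)) :
    ∃ T, (additivePoly Fq n b).eval T = 0 ∧ (additivePoly Fq n d).eval T ≠ 0 := by
  have hn0 : n ≠ 0 := by lia
  contrapose! h
  refine pow_card_sub_one_eq_of_additivePoly_dvd Fq hn hb hd
    ((IsAlgClosed.dvd_iff_roots_le_roots (additivePoly_ne_zero Fq hn0 hb)
      (additivePoly_ne_zero Fq hn0 hd)).mpr ?_)
  exact (Multiset.le_iff_subset (nodup_roots (separable_additivePoly Fq hn0 hb))).mpr fun T hT ↦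
    (mem_roots (additivePoly_ne_zero Fq hn0 hd)).mpr (h T (isRoot_of_mem_roots hT))

end AdditivePolynomial

section Orbits

theorem map_prod_range_pow_pow {κ B F : Type*} [Monoid κ] [CommMonoid B] [FunLike F B B]
    [MonoidHomClass F B B] (φ : F) {g : κ → B} {k r : ℕ} (hg : ∀ c, φ (g c) = g (c ^ k))
    {c : κ} (hc : c ^ k ^ r = c) :
    φ (∏ i ∈ Finset.range r, g (c ^ k ^ i)) = ∏ i ∈ Finset.range r, g (c ^ k ^ i) := by
  simp only [map_prod, hg, ← pow_mul, ← pow_succ]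
  cases r with
  | zero => rfl
  | succ r => rw [Finset.prod_range_succ, Finset.prod_range_succ' _ r, hc, pow_zero, pow_one]

theorem injective_iterate_sigma {α ι : Type*} {f : α → α} {x : ι → α} {r : ι → ℕ}
    (hr : Function.Injective r) (hx : ∀ j, Function.minimalPeriod f (x j) = r j) :
    Function.Injective fun p : Σ j, Fin (r j) ↦ f^[p.2] (x p.1) := by
  have hper (p : Σ j, Fin (r j)) : Function.minimalPeriod f (f^[p.2] (x p.1)) = r p.1 := by
    rw [Function.minimalPeriod_apply_iterate, hx]
    exact Function.minimalPeriod_pos_iff_mem_periodicPts.mp (hx p.1 ▸ p.2.pos)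
  rintro ⟨j, i⟩ ⟨l, k⟩ h
  obtain rfl : j = l := hr (by rw [← hper ⟨j, i⟩, ← hper ⟨l, k⟩]; exact congrArg _ h)
  have hik : (i : ℕ) = k := Function.iterate_injOn_Iio_minimalPeriod
    ((hx j).symm ▸ i.isLt) ((hx j).symm ▸ k.isLt) h
  rw [Fin.ext hik]

theorem pow_pow_eq_self_of_dvd {M : Type*} [Monoid M] {c : M} {k r n : ℕ} (h : c ^ k ^ r = c)
    (hrn : r ∣ n) : c ^ k ^ n = c := by
  have : Function.IsPeriodicPt (· ^ k) r c := by
    simpa only [Function.IsPeriodicPt, Function.IsFixedPt, pow_iterate] using h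
  simpa only [Function.IsPeriodicPt, Function.IsFixedPt, pow_iterate] using this.trans_dvd hrn

theorem pow_ne_self_of_isPrimitiveRoot {κ : Type*} [Field κ] {c : κ} {k s : ℕ} (hk : 1 < k)
    (hks : k ^ 2 ≤ s) (hc : IsPrimitiveRoot c (s * s - 1)) :
    ((c ^ 2) ^ (k - 1)) ^ s ≠ (c ^ 2) ^ (k - 1) := by
  intro h
  have hs : 4 ≤ s := le_trans (Nat.pow_le_pow_left hk 2) hks
  have hss : 1 < s * s := by nlinarith
  have hc0 : c ≠ 0 := hc.ne_zero (Nat.sub_pos_of_lt hss).ne'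
  have hone : c ^ (2 * (k - 1) * (s - 1)) = 1 := by
    refine mul_right_cancel₀ (pow_ne_zero (k - 1) (pow_ne_zero 2 hc0)) ?_
    rw [pow_mul, pow_mul, ← pow_succ, Nat.sub_add_cancel (by lia), h, one_mul]
  have hlt : 2 * (k - 1) < s + 1 := by
    have : 2 * k ≤ s := by nlinarith
    lia
  refine hc.pow_ne_one_of_pos_of_lt (mul_pos (by lia) (by lia)).ne' ?_ hone
  calc 2 * (k - 1) * (s - 1) < (s + 1) * (s - 1) := Nat.mul_lt_mul_of_pos_right hlt (by lia)
    _ = s * s - 1 := (Nat.mul_self_sub_mul_self_eq s 1).symm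

theorem exists_minimalPeriod_eq_two_pow (Fq : Type*) [Field Fq] [Fintype Fq] (κ : Type*) [Field κ]
    [Algebra Fq κ] [IsAlgClosed κ] (k : ℕ) :
    ∃ c : κ, c ≠ 0 ∧ c ^ Fintype.card Fq ^ 2 ^ (k + 2) = c ∧
      Function.minimalPeriod (· ^ Fintype.card Fq)
        ((c ^ 2) ^ (Fintype.card Fq - 1)) = 2 ^ (k + 2) := by
  set Q := Fintype.card Fq
  set s := Q ^ 2 ^ (k + 1)
  have hQ1 : 1 < Q := Fintype.one_lt_card
  have hs : Q ^ 2 ≤ s := Nat.pow_le_pow_right (by lia) (Nat.le_self_pow k.succ_ne_zero 2)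
  have hsq : Q ^ 2 ^ (k + 2) = s * s := by rw [← sq, ← pow_mul, ← pow_succ]
  have hss : 1 ≤ s * s := hsq ▸ Nat.one_le_pow _ _ (by lia)
  have : NeZero ((s * s - 1 : ℕ) : κ) := ⟨by
    rw [Nat.cast_sub hss, ← hsq, natCast_card_pow_eq_zero Fq (by positivity)]
    simp⟩
  obtain ⟨c, hc⟩ := HasEnoughRootsOfUnity.exists_primitiveRoot κ (s * s - 1)
  have hcQ : c ^ Q ^ 2 ^ (k + 2) = c := by
    rw [hsq, ← Nat.sub_add_cancel hss, pow_succ, hc.pow_eq_one, one_mul]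
  refine ⟨c, hc.ne_zero (NeZero.of_neZero_natCast κ).ne, hcQ,
    Function.minimalPeriod_eq_prime_pow (fun h ↦ ?_) ?_⟩
  · refine pow_ne_self_of_isPrimitiveRoot hQ1 hs hc ?_
    simpa only [Function.IsPeriodicPt, Function.IsFixedPt, pow_iterate] using h
  · simp only [Function.IsPeriodicPt, Function.IsFixedPt, pow_iterate]
    rw [pow_right_comm, pow_right_comm c, hcQ]

end Orbits

section ClassGroup

variable {R : Type*} [CommRing R] [IsDedekindDomain R] {m : ℕ}

theorem exists_pow_eq_span_singleton_of_mul_eq_pow {a b c : R} {k : ℕ} (hab : IsCoprime a b)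
    (h : a * b = c ^ k) (hm : m ∣ k) : ∃ I : Ideal R, I ^ m = Ideal.span {a} := by
  let := UniqueFactorizationMonoid.toGCDMonoid (Ideal R)
  obtain ⟨J, hJ⟩ := exists_eq_pow_of_mul_eq_pow_of_coprime
    ((Ideal.isCoprime_span_singleton_iff a b).mpr hab) (c := Ideal.span {c}) (n := k)
    (by rw [Ideal.span_singleton_mul_span_singleton, h, Ideal.span_singleton_pow])
  obtain ⟨l, rfl⟩ := hm
  exact ⟨J ^ l, by rw [hJ, ← pow_mul, mul_comm]⟩

variable {ι : Type*} [Fintype ι]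

theorem exists_addMonoidHom_apply_eq_sum_val_nsmul {A : Type*} [AddCommGroup A] [NeZero m]
    {g : ι → A} (hg : ∀ j, m • g j = 0) :
    ∃ φ : (ι → ZMod m) →+ A, ∀ w, φ w = ∑ j, (w j).val • g j := by
  have hg' (j : ι) : zmultiplesHom A (g j) (m : ℤ) = 0 := by
    rw [zmultiplesHom_apply, natCast_zsmul, hg]
  refine ⟨∑ j, (ZMod.lift m ⟨zmultiplesHom A (g j), hg' j⟩).comp (Pi.evalAddMonoidHom _ j),
    fun w ↦ ?_⟩
  rw [AddMonoidHom.finsetSum_apply]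
  refine Finset.sum_congr rfl fun j _ ↦ ?_
  have hj : w j = (((w j).val : ℤ) : ZMod m) := by simp
  conv_lhs => rw [AddMonoidHom.comp_apply, Pi.evalAddMonoidHom_apply, hj, ZMod.lift_coe]
  rw [zmultiplesHom_apply, natCast_zsmul]

theorem exists_injective_addMonoidHom_classGroup (hm : m ≠ 0) {I : ι → Ideal R} {z : ι → R}
    (hz : ∀ j, z j ≠ 0) (hI : ∀ j, I j ^ m = Ideal.span {z j})
    (hdvd : ∀ (v : ι → ℕ) (b : R), Associated (b ^ m) (∏ j, z j ^ v j) → ∀ j, m ∣ v j) :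
    ∃ φ : (ι → ZMod m) →+ Additive (ClassGroup R), Function.Injective φ := by
  have : NeZero m := ⟨hm⟩
  have hI0 (j : ι) : I j ∈ nonZeroDivisors (Ideal R) := by
    refine mem_nonZeroDivisors_of_ne_zero fun h ↦ hz j ?_
    rw [← Ideal.span_singleton_eq_bot, ← hI, h, zero_pow hm, Ideal.zero_eq_bot]
  lift I to ι → nonZeroDivisors (Ideal R) using hI0
  have hmI (j : ι) : m • Additive.ofMul (ClassGroup.mk0 (I j)) = 0 := by
    rw [← ofMul_pow, ← map_pow, ofMul_eq_zero]
    exact (ClassGroup.mk0_eq_one_iff (I j ^ m).2).mpr ⟨z j, hI j⟩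
  obtain ⟨φ, hφ⟩ := exists_addMonoidHom_apply_eq_sum_val_nsmul hmI
  refine ⟨φ, (injective_iff_map_eq_zero φ).mpr fun w hw ↦ funext fun j ↦ ?_⟩
  have hprod : ClassGroup.mk0 (∏ j, I j ^ (w j).val) = 1 := by
    rw [← ofMul_eq_zero, ← hw, hφ]
    simp only [map_prod, map_pow, ofMul_prod, ofMul_pow]
  obtain ⟨b, hb⟩ := (ClassGroup.mk0_eq_one_iff (∏ j, I j ^ (w j).val).2).mp hprod
  have hass : Associated (b ^ m) (∏ j, z j ^ (w j).val) := by
    rw [← Ideal.span_singleton_eq_span_singleton, ← Ideal.span_singleton_pow,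
      ← Ideal.submodule_span_eq, ← hb, ← Ideal.prod_span_singleton]
    simp [← Ideal.span_singleton_pow, ← hI, ← Finset.prod_pow, pow_right_comm]
  rw [Pi.zero_apply, ← ZMod.natCast_zmod_val (w j), ZMod.natCast_eq_zero_iff]
  exact hdvd _ b hass j

end ClassGroup

/-- The coordinate ring `κ[t][s] / (s ^ 2 - (t ^ (q ^ n) - t))` over an extension `κ` of `𝔽_q`,
with `t` the polynomial variable and `s = ω`. -/
abbrev HyperellipticRing (Fq κ : Type*) [Fintype Fq] [Field κ] (n : ℕ) : Type _ :=
  QuadraticAlgebra κ[X] (X ^ (Fintype.card Fq ^ n) - X) 0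

namespace HyperellipticRing

open QuadraticAlgebra (omega)

variable (Fq : Type*) [Field Fq] [Fintype Fq] (κ : Type*) [Field κ] {n : ℕ}

local notation "q" => Fintype.card Fq

theorem odd_natDegree_X_pow_card_pow_sub_X (hq : Odd q) (hn : n ≠ 0) :
    Odd (X ^ (q ^ n) - X : κ[X]).natDegree := by
  rw [FiniteField.X_pow_card_pow_sub_X_natDegree_eq _ hn Fintype.one_lt_card]
  exact hq.pow

theorem not_isUnit_X_pow_card_pow_sub_X (hn : n ≠ 0) : ¬IsUnit (X ^ (q ^ n) - X : κ[X]) := by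
  intro h
  have := natDegree_eq_zero_of_isUnit h
  rw [FiniteField.X_pow_card_pow_sub_X_natDegree_eq _ hn Fintype.one_lt_card] at this
  exact pow_ne_zero n Fintype.card_ne_zero this

variable [Algebra Fq κ]

theorem squarefree_X_pow_card_pow_sub_X (hn : n ≠ 0) : Squarefree (X ^ (q ^ n) - X : κ[X]) := by
  refine Separable.squarefree ⟨0, -1, ?_⟩
  rw [derivative_sub, derivative_X_pow, natCast_card_pow_eq_zero Fq hn, derivative_X]
  simp

theorem two_ne_zero_of_odd_card (hq : Odd q) : (2 : κ) ≠ 0 := by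
  have hchar : ringChar Fq ≠ 2 := fun h ↦
    Nat.not_even_iff_odd.mpr hq (Nat.even_iff.mpr (FiniteField.even_card_of_char_two h))
  rw [← map_ofNat (algebraMap Fq κ) 2]
  exact (_root_.map_ne_zero _).mpr (Ring.two_ne_zero hchar)

theorem isUnit_two_of_odd_card (hq : Odd q) : IsUnit (2 : κ[X]) := by
  rw [← map_ofNat C 2]
  exact isUnit_C.mpr (two_ne_zero_of_odd_card Fq κ hq).isUnit

theorem isDedekindDomain (hq : Odd q) (hn : n ≠ 0) :
    IsDedekindDomain (HyperellipticRing Fq κ n) :=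
  isDedekindDomain_quadraticAlgebra (squarefree_X_pow_card_pow_sub_X Fq κ hn)
    (not_isUnit_X_pow_card_pow_sub_X Fq κ hn) (isUnit_two_of_odd_card Fq κ hq)

section PowNormElt

variable {κ}

/-- The polynomial `y = W_b + 1 / 2` with `b = c ^ 2`. If `n` is even and `c ^ (q ^ n) = c`, it
solves `y ^ q + y - 1 = c ^ 2 * (t ^ (q ^ n) - t)`. -/
noncomputable def shiftedPoly (n : ℕ) (c : κ) : κ[X] :=
  additivePoly Fq n (c ^ 2) + C 2⁻¹

/-- The function `y ^ ((q + 1) / 2) - c * s`, where `y` is `shiftedPoly Fq n c`. If `n` is even and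
`c ^ (q ^ n) = c`, its norm is `(y - 1) ^ (q + 1)`. -/
noncomputable def powNormElt (n : ℕ) (c : κ) : HyperellipticRing Fq κ n :=
  algebraMap κ[X] _ (shiftedPoly Fq n c) ^ ((q + 1) / 2) - c • omega

theorem im_powNormElt (c : κ) : (powNormElt Fq n c).im = -C c := by
  simp [powNormElt, ← map_pow, smul_eq_C_mul]

theorem powNormElt_ne_zero {c : κ} (hc : c ≠ 0) : powNormElt Fq n c ≠ 0 := fun h ↦
  hc (by simpa [im_powNormElt] using congrArg QuadraticAlgebra.im h)

theorem star_powNormElt (c : κ) : star (powNormElt Fq n c) = powNormElt Fq n (-c) := by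
  have hstar (p : κ[X]) :
      star (algebraMap κ[X] (HyperellipticRing Fq κ n) p) = algebraMap _ _ p := by
    ext <;> simp
  have homega : star (c • omega : HyperellipticRing Fq κ n) = -c • omega := by
    ext <;> simp
  rw [powNormElt, powNormElt, star_sub, star_pow, hstar, homega, shiftedPoly, shiftedPoly, neg_sq]

variable {Fq}

theorem inv_two_pow_card : (2⁻¹ : κ) ^ q = 2⁻¹ := by
  rw [← map_ofNat (algebraMap Fq κ) 2, ← map_inv₀, ← map_pow, FiniteField.pow_card]

theorem shiftedPoly_pow_card_add (hq : Odd q) (hn : Even n) {c : κ} (hc : c ^ (q ^ n) = c) :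
    shiftedPoly Fq n c ^ q + shiftedPoly Fq n c - 1 = C (c ^ 2) * (X ^ (q ^ n) - X) := by
  have hc2 : (c ^ 2) ^ (q ^ n) = c ^ 2 := by rw [pow_right_comm, hc]
  have hhalf : C (2⁻¹ : κ) + C 2⁻¹ = 1 := by
    rw [← C_add, ← two_mul, mul_inv_cancel₀ (two_ne_zero_of_odd_card Fq κ hq), C_1]
  rw [shiftedPoly, add_pow_card_of_algebra Fq, ← C_pow, inv_two_pow_card]
  linear_combination additivePoly_pow_card_add Fq hn hc2 + hhalf

theorem smul_omega_sq (hq : Odd q) (hn : Even n) {c : κ} (hc : c ^ (q ^ n) = c) :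
    (c • omega : HyperellipticRing Fq κ n) ^ 2 =
      algebraMap κ[X] _ (shiftedPoly Fq n c) ^ q + algebraMap κ[X] _ (shiftedPoly Fq n c) - 1 := by
  have := congrArg (algebraMap κ[X] (HyperellipticRing Fq κ n)) (shiftedPoly_pow_card_add hq hn hc)
  rw [map_sub, map_add, map_pow, map_one] at this
  rw [this, _root_.smul_pow, sq omega, QuadraticAlgebra.omega_mul_omega_eq_mk]
  ext1 <;> simp only [QuadraticAlgebra.re_smul, QuadraticAlgebra.im_smul,
    QuadraticAlgebra.algebraMap_re, QuadraticAlgebra.algebraMap_im, smul_eq_C_mul, mul_zero]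

theorem norm_powNormElt (hq : Odd q) (hn : Even n) {c : κ} (hc : c ^ (q ^ n) = c) :
    (powNormElt Fq n c).norm = (shiftedPoly Fq n c - 1) ^ (q + 1) := by
  apply QuadraticAlgebra.algebraMap_injective (a := X ^ (q ^ n) - X) (b := (0 : κ[X]))
  have := pow_half_sub_mul_pow_half_add hq (smul_omega_sq hq hn hc)
  rw [QuadraticAlgebra.algebraMap_norm_eq_mul_star, star_powNormElt, map_pow, map_sub, map_one,
    ← this]
  simp [powNormElt, shiftedPoly]

theorem isCoprime_powNormElt (hq : Odd q) (hn : Even n) {c d : κ} (hc : c ^ (q ^ n) = c)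
    (hd : d ^ (q ^ n) = d) (h : c ≠ d) : IsCoprime (powNormElt Fq n c) (powNormElt Fq n d) :=
  ((isCoprime_one_sub_smul h omega).pow.of_isCoprime_of_dvd_left
    (pow_half_sub_dvd_one_sub_pow hq (smul_omega_sq hq hn hc))).of_isCoprime_of_dvd_right
    (pow_half_sub_dvd_one_sub_pow hq (smul_omega_sq hq hn hd))

theorem pow_ne_powNormElt (hq : Odd q) (hn : Even n) (hn0 : n ≠ 0) {c : κ}
    (hc : c ^ (q ^ n) = c) (hc0 : c ≠ 0) (b : HyperellipticRing Fq κ n) {r : ℕ} (hr : 2 ≤ r) :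
    b ^ r ≠ powNormElt Fq n c := by
  intro h
  have him : b.im ≠ 0 := by
    intro him
    have hb : b = algebraMap κ[X] _ b.re := by ext <;> simp [him]
    have := im_powNormElt Fq (n := n) c
    rw [← h, hb, ← map_pow, QuadraticAlgebra.algebraMap_im, eq_comm, neg_eq_zero] at this
    exact hc0 (C_eq_zero.mp this)
  have hb := natDegree_le_natDegree_norm (odd_natDegree_X_pow_card_pow_sub_X Fq κ hq hn0) him
  rw [FiniteField.X_pow_card_pow_sub_X_natDegree_eq _ hn0 Fintype.one_lt_card] at hb
  have hnorm := congrArg (fun z ↦ (QuadraticAlgebra.norm z).natDegree) h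
  simp only [map_pow, norm_powNormElt hq hn hc, natDegree_pow] at hnorm
  have hdeg : (shiftedPoly Fq n c - 1).natDegree ≤ q ^ (n - 1) := by
    rw [shiftedPoly, ← C_1, natDegree_sub_C, natDegree_add_C]
    exact natDegree_additivePoly_le Fq (c ^ 2)
  have hpow : q ^ n = q ^ (n - 1) * q := by
    rw [← pow_succ, Nat.sub_add_cancel (Nat.pos_of_ne_zero hn0)]
  have hq1 : 1 < q := Fintype.one_lt_card
  have hpos : 0 < q ^ (n - 1) := pow_pos Fintype.card_pos _
  nlinarith

theorem dvd_of_powNormElt_pow_eq_pow [IsAlgClosed κ] (hq : Odd q) (hn : Even n) (hn0 : n ≠ 0)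
    {c : κ} (hc : c ^ (q ^ n) = c) (hc0 : c ≠ 0) {e m : ℕ} (hm : m ≠ 0)
    {b : HyperellipticRing Fq κ n} (h : powNormElt Fq n c ^ e = b ^ m) : m ∣ e := by
  have := isDedekindDomain Fq κ hq hn0
  obtain ⟨a, ha⟩ := exists_pow_div_gcd_eq_of_pow_eq_pow κ hm h
  have hle : m / e.gcd m ≤ 1 := by
    by_contra! hlt
    exact pow_ne_powNormElt hq hn hn0 hc hc0 a hlt ha
  have hmul := Nat.div_mul_cancel (Nat.gcd_dvd_right e m)
  rcases Nat.le_one_iff_eq_zero_or_eq_one.mp hle with h0 | h1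
  · exact absurd (by rw [← hmul, h0, zero_mul]) hm
  · rw [h1, one_mul] at hmul
    exact hmul.symm.dvd.trans (Nat.gcd_dvd_left e m)

end PowNormElt

section Translation

variable {κ}

/-- The automorphism `t ↦ t + T`, `s ↦ s` of the coordinate ring, for a root `T` of
`t ^ (q ^ n) - t`. -/
noncomputable def translate {T : κ} (hT : T ^ (q ^ n) = T) :
    HyperellipticRing Fq κ n →ₐ[κ] HyperellipticRing Fq κ n :=
  quadraticAlgebraMap (taylorAlgHom T)
    (by simp [add_pow_card_pow_of_algebra, ← C_pow, hT]) (map_zero _)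

theorem translate_powNormElt {T : κ} (hT : T ^ (q ^ n) = T) (c : κ) :
    translate Fq hT (powNormElt Fq n c) =
      (algebraMap κ[X] _ (shiftedPoly Fq n c) +
        algebraMap κ _ ((additivePoly Fq n (c ^ 2)).eval T)) ^ ((q + 1) / 2) - c • omega := by
  have htaylor : taylorAlgHom T (shiftedPoly Fq n c) =
      shiftedPoly Fq n c + C ((additivePoly Fq n (c ^ 2)).eval T) := by
    change taylor T (additivePoly Fq n (c ^ 2) + C 2⁻¹) = _
    rw [map_add, taylor_C, taylor_additivePoly, shiftedPoly, add_right_comm]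
  rw [translate, powNormElt, map_sub, map_pow, map_smul, quadraticAlgebraMap_algebraMap,
    quadraticAlgebraMap_omega, htaylor, map_add, C_eq_algebraMap,
    ← IsScalarTower.algebraMap_apply κ κ[X]]

theorem algebraMap_mul_pow_card_pow {T : κ} (hT : T ^ (q ^ n) = T) (a : Fq) :
    (algebraMap Fq κ a * T) ^ (q ^ n) = algebraMap Fq κ a * T := by
  rw [mul_pow, hT, ← map_pow, FiniteField.pow_card_pow]

/-- The product of the translates by the `𝔽_q`-multiples of `T`. -/
noncomputable def translateProd {T : κ} (hT : T ^ (q ^ n) = T) :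
    HyperellipticRing Fq κ n →* HyperellipticRing Fq κ n :=
  ∏ a : Fq, (translate Fq (algebraMap_mul_pow_card_pow Fq hT a) : _ →* _)

theorem translateProd_apply {T : κ} (hT : T ^ (q ^ n) = T) (z : HyperellipticRing Fq κ n) :
    translateProd Fq hT z =
      ∏ a : Fq, translate Fq (algebraMap_mul_pow_card_pow Fq hT a) z := by
  simp [translateProd, MonoidHom.finsetProd_apply]

variable {Fq}

theorem translateProd_powNormElt_of_eval_eq_zero {T : κ} (hT : T ^ (q ^ n) = T) {c : κ}
    (h : (additivePoly Fq n (c ^ 2)).eval T = 0) :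
    translateProd Fq hT (powNormElt Fq n c) = powNormElt Fq n c ^ q := by
  simp only [translateProd_apply, translate_powNormElt, eval_algebraMap_mul_additivePoly, h,
    mul_zero, map_zero, add_zero, Finset.prod_const, Finset.card_univ]
  rfl

theorem translateProd_powNormElt_of_eval_ne_zero [IsDomain (HyperellipticRing Fq κ n)]
    (hq : Odd q) (hn : Even n) {T : κ} (hT : T ^ (q ^ n) = T) {c : κ} (hc : c ^ (q ^ n) = c)
    (h : (additivePoly Fq n (c ^ 2)).eval T ≠ 0) :
    translateProd Fq hT (powNormElt Fq n c) = (1 - c • omega) ^ (q + 1) := by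
  have hu : (additivePoly Fq n (c ^ 2)).eval T ^ q = -(additivePoly Fq n (c ^ 2)).eval T := by
    have := eval_additivePoly_pow_card_add Fq hn (b := c ^ 2) (by rw [pow_right_comm, hc]) T
    rwa [hT, sub_self, mul_zero, add_eq_zero_iff_eq_neg] at this
  simp only [translateProd_apply, translate_powNormElt, eval_algebraMap_mul_additivePoly, map_mul,
    ← IsScalarTower.algebraMap_apply Fq κ]
  exact prod_pow_half_sub hq (smul_omega_sq hq hn hc)
    ((map_ne_zero_iff _ (FaithfulSMul.algebraMap_injective κ _)).mpr h)
    (by rw [← map_pow, hu, map_neg])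

theorem exists_prod_powNormElt_filter_eq_pow [IsDedekindDomain (HyperellipticRing Fq κ n)]
    (hq : Odd q) (hn : Even n) {m : ℕ} (hm : m ∣ q + 1) {T : κ} (hT : T ^ (q ^ n) = T)
    {ι : Type*} (S : Finset ι) (γ : ι → κ) (hγ : ∀ i ∈ S, γ i ^ (q ^ n) = γ i) (e : ι → ℕ)
    [DecidablePred fun i ↦ (additivePoly Fq n (γ i ^ 2)).eval T = 0]
    {b : HyperellipticRing Fq κ n} (h : ∏ i ∈ S, powNormElt Fq n (γ i) ^ e i = b ^ m) :
    ∃ b', ∏ i ∈ S with (additivePoly Fq n (γ i ^ 2)).eval T = 0,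
      powNormElt Fq n (γ i) ^ e i = b' ^ m := by
  classical
  have hm0 : m ≠ 0 := ne_zero_of_dvd_ne_zero (Nat.succ_ne_zero q) hm
  obtain ⟨d, hd⟩ := hm
  have hcop : Nat.Coprime q m := Nat.Coprime.coprime_dvd_right ⟨d, hd⟩ (by simp)
  let D : HyperellipticRing Fq κ n :=
    ∏ i ∈ S with ¬(additivePoly Fq n (γ i ^ 2)).eval T = 0, ((1 - γ i • omega) ^ d) ^ e i
  have hne (c : κ) : (1 - c • omega : HyperellipticRing Fq κ n) ≠ 0 :=
    fun h ↦ by simpa [QuadraticAlgebra.re_one] using congrArg QuadraticAlgebra.re h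
  have hD : D ≠ 0 := Finset.prod_ne_zero_iff.mpr fun i _ ↦
    pow_ne_zero _ (pow_ne_zero _ (hne (γ i)))
  have hsplit : (∏ i ∈ S with (additivePoly Fq n (γ i ^ 2)).eval T = 0,
      powNormElt Fq n (γ i) ^ e i) ^ q * D ^ m = translateProd Fq hT b ^ m := by
    rw [← map_pow, ← h, map_prod,
      ← Finset.prod_filter_mul_prod_filter_not S (fun i ↦ (additivePoly Fq n (γ i ^ 2)).eval T = 0)]
    simp only [D, ← Finset.prod_pow, map_pow]
    congr 1
    · refine Finset.prod_congr rfl fun i hi ↦ ?_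
      rw [translateProd_powNormElt_of_eval_eq_zero hT (Finset.mem_filter.mp hi).2, pow_right_comm]
    · refine Finset.prod_congr rfl fun i hi ↦ ?_
      obtain ⟨hiS, hi⟩ := Finset.mem_filter.mp hi
      rw [translateProd_powNormElt_of_eval_ne_zero hq hn hT (hγ i hiS) hi, hd, pow_right_comm,
        pow_mul', pow_right_comm _ m]
  obtain ⟨E, hE⟩ := (IsIntegrallyClosed.pow_dvd_pow_iff hm0).mp (hsplit ▸ dvd_mul_left _ _)
  rw [hE, mul_pow, mul_comm, mul_right_inj' (pow_ne_zero m hD)] at hsplit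
  obtain ⟨b', hb'⟩ := exists_pow_eq_of_coprime_of_pow_eq_pow hcop hm0 hsplit
  exact ⟨b', hb'.symm⟩

theorem dvd_of_prod_powNormElt_eq_pow [IsAlgClosed κ] (hq : Odd q) (hn : Even n) (hn0 : n ≠ 0)
    {m : ℕ} (hm : m ∣ q + 1) {ι : Type*} (S : Finset ι) {γ : ι → κ}
    (hγ : ∀ i ∈ S, γ i ^ (q ^ n) = γ i) (hγ0 : ∀ i ∈ S, γ i ≠ 0)
    (hinj : Set.InjOn (fun i ↦ (γ i ^ 2) ^ (q - 1)) S) {e : ι → ℕ}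
    {b : HyperellipticRing Fq κ n} (h : ∏ i ∈ S, powNormElt Fq n (γ i) ^ e i = b ^ m)
    {i₀ : ι} (hi₀ : i₀ ∈ S) : m ∣ e i₀ := by
  classical
  have := isDedekindDomain Fq κ hq hn0
  induction S using Finset.strongInduction generalizing b with
  | H S ih =>
    by_cases hS : ∃ j ∈ S, j ≠ i₀
    · obtain ⟨j, hjS, hj⟩ := hS
      -- A root of `W_{γ i₀ ^ 2}` that is not one of `W_{γ j ^ 2}` eliminates `j` and keeps `i₀`.
      obtain ⟨T, hT0, hTj⟩ := exists_eval_additivePoly_eq_zero_and_ne_zero Fq (n := n)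
        (hn.two_dvd.elim fun k hk ↦ by lia) (pow_ne_zero 2 (hγ0 i₀ hi₀))
        (pow_ne_zero 2 (hγ0 j hjS)) fun h ↦ hj (hinj hjS hi₀ h.symm)
      have hT := pow_card_pow_eq_self_of_eval_additivePoly_eq_zero Fq hn
        (by rw [pow_right_comm, hγ i₀ hi₀]) (pow_ne_zero 2 (hγ0 i₀ hi₀)) hT0
      obtain ⟨b', hb'⟩ := exists_prod_powNormElt_filter_eq_pow hq hn hm hT S γ hγ e h
      have hsub := Finset.filter_subset (fun i ↦ (additivePoly Fq n (γ i ^ 2)).eval T = 0) S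
      exact ih _ (Finset.filter_ssubset.mpr ⟨j, hjS, hTj⟩) (fun i hi ↦ hγ i (hsub hi))
        (fun i hi ↦ hγ0 i (hsub hi)) (hinj.mono hsub) hb' (Finset.mem_filter.mpr ⟨hi₀, hT0⟩)
    · push Not at hS
      rw [Finset.eq_singleton_iff_unique_mem.mpr ⟨hi₀, hS⟩, Finset.prod_singleton] at h
      exact dvd_of_powNormElt_pow_eq_pow hq hn hn0 (hγ i₀ hi₀) (hγ0 i₀ hi₀)
        (ne_zero_of_dvd_ne_zero (Nat.succ_ne_zero q) hm) h

end Translation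

section Descent

variable {κ} {κ' : Type*} [Field κ'] [Algebra Fq κ']

/-- The action of an `𝔽_q`-homomorphism `κ → κ'` on coefficients; it serves both as extension of
scalars from `𝔽_q` and as the Frobenius automorphism. -/
noncomputable def mapCoeff (n : ℕ) (g : κ →ₐ[Fq] κ') :
    HyperellipticRing Fq κ n →ₐ[Fq] HyperellipticRing Fq κ' n :=
  quadraticAlgebraMap (mapAlgHom g) (by simp) (map_zero _)

theorem mapCoeff_algebraMap (g : κ →ₐ[Fq] κ') (p : κ[X]) :
    mapCoeff Fq n g (algebraMap κ[X] _ p) = algebraMap κ'[X] _ (p.map g) :=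
  quadraticAlgebraMap_algebraMap _ _ _ p

theorem map_shiftedPoly (g : κ →ₐ[Fq] κ') (c : κ) :
    (shiftedPoly Fq n c).map g = shiftedPoly Fq n (g c) := by
  simp [shiftedPoly, map_additivePoly, map_ofNat]

theorem mapCoeff_powNormElt (g : κ →ₐ[Fq] κ') (c : κ) :
    mapCoeff Fq n g (powNormElt Fq n c) = powNormElt Fq n (g c) := by
  have homega : mapCoeff Fq n g (c • omega) = g c • omega := by
    ext1 <;> simp [mapCoeff, smul_eq_C_mul]
  rw [powNormElt, map_sub, map_pow, mapCoeff_algebraMap, map_shiftedPoly, homega, powNormElt]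

theorem exists_map_ofId_eq_of_map_frobeniusAlgHom_eq {p : κ[X]}
    (hp : p.map (FiniteField.frobeniusAlgHom Fq κ) = p) :
    ∃ p₀ : Fq[X], p₀.map (Algebra.ofId Fq κ) = p := by
  refine (lifts_iff_coeff_lifts p).mpr fun k ↦ ?_
  have hk : p.coeff k ^ q = p.coeff k := by
    simpa using congrArg (coeff · k) hp
  obtain ⟨a, -, ha⟩ := Finset.prod_eq_zero_iff.mp
    ((prod_add_algebraMap Fq (p.coeff k)).trans (sub_eq_zero.mpr hk))
  exact ⟨-a, by simpa [neg_eq_iff_add_eq_zero, add_comm] using ha⟩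

theorem exists_mapCoeff_ofId_eq_of_mapCoeff_frobeniusAlgHom_eq {z : HyperellipticRing Fq κ n}
    (hz : mapCoeff Fq n (FiniteField.frobeniusAlgHom Fq κ) z = z) :
    ∃ z₀, mapCoeff Fq n (Algebra.ofId Fq κ) z₀ = z := by
  obtain ⟨x, hx⟩ := exists_map_ofId_eq_of_map_frobeniusAlgHom_eq Fq
    (congrArg QuadraticAlgebra.re hz)
  obtain ⟨y, hy⟩ := exists_map_ofId_eq_of_map_frobeniusAlgHom_eq Fq
    (congrArg QuadraticAlgebra.im hz)
  exact ⟨⟨x, y⟩, QuadraticAlgebra.ext hx hy⟩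

theorem exists_mapCoeff_eq_prod_powNormElt {c : κ} {r : ℕ} (hc : c ^ (q ^ r) = c) :
    ∃ z, mapCoeff Fq n (Algebra.ofId Fq κ) z =
      ∏ i ∈ Finset.range r, powNormElt Fq n (c ^ q ^ i) :=
  exists_mapCoeff_ofId_eq_of_mapCoeff_frobeniusAlgHom_eq Fq
    (map_prod_range_pow_pow (mapCoeff Fq n (FiniteField.frobeniusAlgHom Fq κ))
      (fun d ↦ mapCoeff_powNormElt Fq _ d) hc)

variable {Fq}

theorem exists_norm_eq_pow_of_mapCoeff_eq_prod (hq : Odd q) (hn : Even n) {c : κ}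
    (hcn : c ^ (q ^ n) = c) {r : ℕ} (hcr : c ^ (q ^ r) = c) {z : HyperellipticRing Fq Fq n}
    (hz : mapCoeff Fq n (Algebra.ofId Fq κ) z =
      ∏ i ∈ Finset.range r, powNormElt Fq n (c ^ q ^ i)) :
    ∃ p : Fq[X], z.norm = p ^ (q + 1) := by
  obtain ⟨p, hp⟩ := exists_map_ofId_eq_of_map_frobeniusAlgHom_eq Fq
    (map_prod_range_pow_pow (mapAlgHom (FiniteField.frobeniusAlgHom Fq κ))
      (g := fun d ↦ shiftedPoly Fq n d - 1)
      (fun d ↦ by simp [coe_mapAlgHom, map_shiftedPoly]) hcr)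
  refine ⟨p, map_injective _ (Algebra.ofId Fq κ).injective ?_⟩
  calc z.norm.map (Algebra.ofId Fq κ : Fq →+* κ) = (mapCoeff Fq n (Algebra.ofId Fq κ) z).norm :=
        (norm_quadraticAlgebraMap (mapAlgHom (Algebra.ofId Fq κ)) _ _ z).symm
    _ = ∏ i ∈ Finset.range r, (shiftedPoly Fq n (c ^ q ^ i) - 1) ^ (q + 1) := by
        rw [hz, map_prod]
        exact Finset.prod_congr rfl fun i _ ↦
          norm_powNormElt hq hn (by rw [pow_right_comm, hcn])
    _ = (p ^ (q + 1)).map (Algebra.ofId Fq κ : Fq →+* κ) := by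
        rw [Finset.prod_pow, Polynomial.map_pow, hp]

theorem isCoprime_star_of_isCoprime_mapCoeff_star (g : κ →ₐ[Fq] κ')
    {z : HyperellipticRing Fq κ n} (h : IsCoprime (mapCoeff Fq n g z) (star (mapCoeff Fq n g z))) :
    IsCoprime z (star z) := by
  rw [isCoprime_star_iff, mapCoeff, trace_quadraticAlgebraMap, norm_quadraticAlgebraMap] at h
  exact isCoprime_star_iff.mpr ((isCoprime_map (g : κ →+* κ')).mp h)

theorem isCoprime_star_of_mapCoeff_eq_prod (hq : Odd q) (hn : Even n) {c : κ} (hc0 : c ≠ 0)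
    (hc : c ^ (q ^ n) = c) {r : ℕ}
    (hr : Function.minimalPeriod (· ^ q) ((c ^ 2) ^ (q - 1)) = r)
    {z : HyperellipticRing Fq Fq n}
    (hz : mapCoeff Fq n (Algebra.ofId Fq κ) z =
      ∏ i ∈ Finset.range r, powNormElt Fq n (c ^ q ^ i)) :
    IsCoprime z (star z) := by
  apply isCoprime_star_of_isCoprime_mapCoeff_star (Algebra.ofId Fq κ)
  rw [hz, star_prod]
  simp only [star_powNormElt]
  have hconj (i : ℕ) : (c ^ q ^ i) ^ (q ^ n) = c ^ q ^ i := by rw [pow_right_comm, hc]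
  refine IsCoprime.prod_left fun i hi ↦ IsCoprime.prod_right fun k hk ↦
    isCoprime_powNormElt hq hn (hconj i) (by rw [(hq.pow : Odd (q ^ n)).neg_pow, hconj]) fun h ↦ ?_
  have hik : i = k := by
    apply Function.iterate_injOn_Iio_minimalPeriod (f := (· ^ q)) (x := (c ^ 2) ^ (q - 1))
      (hr ▸ Finset.mem_range.mp hi) (hr ▸ Finset.mem_range.mp hk)
    have hsq := congrArg (fun x ↦ (x ^ 2) ^ (q - 1)) h
    simp only [neg_sq] at hsq
    simpa only [pow_iterate, pow_right_comm _ _ (q ^ _)] using hsq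
  subst hik
  have : (2 : κ) * c ^ q ^ i = 0 := by linear_combination h
  exact mul_ne_zero (two_ne_zero_of_odd_card Fq κ hq) (pow_ne_zero _ hc0) this

theorem dvd_of_associated_pow_prod_pow [IsAlgClosed κ] (hq : Odd q) (hn : Even n) (hn0 : n ≠ 0)
    {m : ℕ} (hm : m ∣ q + 1) {ι : Type*} [Fintype ι] {c : ι → κ} (hc0 : ∀ j, c j ≠ 0)
    (hc : ∀ j, c j ^ (q ^ n) = c j) {r : ι → ℕ} (hr0 : ∀ j, r j ≠ 0) (hr : Function.Injective r)
    (hper : ∀ j, Function.minimalPeriod (· ^ q) ((c j ^ 2) ^ (q - 1)) = r j)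
    {z : ι → HyperellipticRing Fq Fq n}
    (hz : ∀ j, mapCoeff Fq n (Algebra.ofId Fq κ) (z j) =
      ∏ i ∈ Finset.range (r j), powNormElt Fq n (c j ^ q ^ i))
    {v : ι → ℕ} {b : HyperellipticRing Fq Fq n} (h : Associated (b ^ m) (∏ j, z j ^ v j))
    (j : ι) : m ∣ v j := by
  obtain ⟨u, hu⟩ := h
  obtain ⟨a, ha⟩ := exists_eq_algebraMap_C_of_isUnit
    (odd_natDegree_X_pow_card_pow_sub_X Fq Fq hq hn0) u.isUnit
  obtain ⟨d, hd⟩ := IsAlgClosed.exists_pow_nat_eq (algebraMap Fq κ a)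
    (Nat.pos_of_dvd_of_pos hm (Nat.succ_pos q))
  have hprod : ∏ x : Σ j, Fin (r j), powNormElt Fq n (c x.1 ^ q ^ (x.2 : ℕ)) ^ v x.1 =
      (mapCoeff Fq n (Algebra.ofId Fq κ) b * algebraMap κ[X] _ (C d)) ^ m := by
    calc _ = mapCoeff Fq n (Algebra.ofId Fq κ) (∏ j, z j ^ v j) := by
          simp only [Fintype.prod_sigma, map_prod, map_pow, hz, Finset.prod_range, Finset.prod_pow]
      _ = _ := by
          rw [← hu, ha, map_mul, mapCoeff_algebraMap, mul_pow, ← map_pow, ← map_pow, ← map_pow, hd,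
            map_C]
          rfl
  refine dvd_of_prod_powNormElt_eq_pow hq hn hn0 hm Finset.univ
    (γ := fun x : Σ j, Fin (r j) ↦ c x.1 ^ q ^ (x.2 : ℕ)) (e := fun x ↦ v x.1)
    (fun x _ ↦ by rw [pow_right_comm, hc]) (fun x _ ↦ pow_ne_zero _ (hc0 x.1)) ?_ hprod
    (Finset.mem_univ ⟨j, ⟨0, Nat.pos_of_ne_zero (hr0 j)⟩⟩)
  have hinj := injective_iterate_sigma hr hper
  simpa only [pow_iterate, pow_right_comm _ (q ^ _)] using hinj.injOn

end Descent

theorem exists_injective_classGroup (hq : Odd q) {m : ℕ} (hm : m ∣ q + 1) {N : ℕ} (hn0 : n ≠ 0)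
    (hNn : 2 ^ (N + 1) ∣ n) :
    ∃ (_ : IsDomain (HyperellipticRing Fq Fq n))
      (φ : (Fin N → ZMod m) →+ Additive (ClassGroup (HyperellipticRing Fq Fq n))),
      Function.Injective φ := by
  have hn : Even n := even_iff_two_dvd.mpr ((dvd_pow_self 2 N.succ_ne_zero).trans hNn)
  have := isDedekindDomain Fq Fq hq hn0
  let κ := AlgebraicClosure Fq
  choose c hc0 hcr hper using fun j : Fin N ↦ exists_minimalPeriod_eq_two_pow Fq κ j
  have hcn (j : Fin N) : c j ^ q ^ n = c j :=
    pow_pow_eq_self_of_dvd (hcr j) ((pow_dvd_pow 2 (by lia)).trans hNn)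
  choose z hz using fun j ↦ exists_mapCoeff_eq_prod_powNormElt Fq (n := n) (hcr j)
  have hz0 (j : Fin N) : z j ≠ 0 := by
    have := isDedekindDomain Fq κ hq hn0
    intro h
    refine Finset.prod_ne_zero_iff.mpr (fun i _ ↦
      powNormElt_ne_zero Fq (pow_ne_zero _ (hc0 j))) ((hz j).symm.trans ?_)
    rw [h, map_zero]
  have hI (j : Fin N) : ∃ I, I ^ m = Ideal.span {z j} := by
    obtain ⟨p, hp⟩ :=
      exists_norm_eq_pow_of_mapCoeff_eq_prod hq hn (hcn j) (hcr j) (hz j)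
    refine exists_pow_eq_span_singleton_of_mul_eq_pow
      (isCoprime_star_of_mapCoeff_eq_prod hq hn (hc0 j) (hcn j) (hper j) (hz j))
      (c := algebraMap Fq[X] _ p) ?_ hm
    rw [← QuadraticAlgebra.algebraMap_norm_eq_mul_star, hp, map_pow]
  choose I hI using hI
  refine ⟨inferInstance, exists_injective_addMonoidHom_classGroup
    (ne_zero_of_dvd_ne_zero (Nat.succ_ne_zero q) hm) hz0 hI fun v b h ↦ ?_⟩
  exact dvd_of_associated_pow_prod_pow hq hn hn0 hm hc0 hcn
    (fun j ↦ by positivity) (fun i j h ↦ by simpa [Fin.ext_iff] using h) hper hz h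

end HyperellipticRing

theorem stmt14_general.{v} (Fq : Type*) [Field Fq] [Fintype Fq] (hq : Odd (Fintype.card Fq))
    (m : ℕ) (hmdvd : m ∣ Fintype.card Fq + 1) (N : ℕ) :
    ∃ n : ℕ, 0 < n ∧
      ∀ (L : Type v) (_ : Field L) (_ : Algebra (Polynomial Fq) L)
        (_ : Algebra (RatFunc Fq) L)
        (_ : IsScalarTower (Polynomial Fq) (RatFunc Fq) L) (s : L),
        s ^ 2 = algebraMap (RatFunc Fq) L
            (RatFunc.X ^ (Fintype.card Fq ^ n) - RatFunc.X) →
        Algebra.adjoin (RatFunc Fq) {s} = ⊤ →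
        ∃ φ : (Fin N → ZMod m) →+
            Additive (ClassGroup (integralClosure (Polynomial Fq) L)),
          Function.Injective φ := by
  have hn : 2 ^ (N + 1) ≠ 0 := by positivity
  obtain ⟨_, φ, hφ⟩ :=
    HyperellipticRing.exists_injective_classGroup Fq hq hmdvd hn (dvd_refl (2 ^ (N + 1)))
  refine ⟨2 ^ (N + 1), Nat.pos_of_ne_zero hn, fun L _ _ _ _ s hs hL ↦ ?_⟩
  have hs' : s ^ 2 = algebraMap Fq[X] L (X ^ (Fintype.card Fq ^ 2 ^ (N + 1)) - X) := by
    rw [hs, IsScalarTower.algebraMap_apply Fq[X] (RatFunc Fq) L, map_sub (algebraMap Fq[X] _),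
      map_pow (algebraMap Fq[X] _), RatFunc.algebraMap_X]
  obtain ⟨e⟩ := nonempty_quadraticAlgebra_algEquiv_integralClosure
    (HyperellipticRing.squarefree_X_pow_card_pow_sub_X Fq Fq hn)
    (HyperellipticRing.not_isUnit_X_pow_card_pow_sub_X Fq Fq hn)
    (HyperellipticRing.isUnit_two_of_odd_card Fq Fq hq) hs' hL
  let ψ := (ClassGroup.mulEquiv e.toRingEquiv).toAdditive
  exact ⟨ψ.toAddMonoidHom.comp φ, ψ.injective.comp hφ⟩

theorem stmt14 (Fq : Type*) [Field Fq] [Fintype Fq]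
    (hq : Fintype.card Fq % 4 = 3)
    (m : ℕ) (hm : 0 < m) (hmdvd : m ∣ Fintype.card Fq + 1) (N : ℕ) :
    ∃ n : ℕ, 0 < n ∧
      ∀ (L : Type) (_ : Field L) (_ : Algebra (Polynomial Fq) L)
        (_ : Algebra (RatFunc Fq) L)
        (_ : IsScalarTower (Polynomial Fq) (RatFunc Fq) L) (s : L),
        s ^ 2 = algebraMap (RatFunc Fq) L
            (RatFunc.X ^ (Fintype.card Fq ^ n) - RatFunc.X) →
        Algebra.adjoin (RatFunc Fq) {s} = ⊤ →
        ∃ φ : (Fin N → ZMod m) →+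
            Additive (ClassGroup (integralClosure (Polynomial Fq) L)),
          Function.Injective φ := by
  exact stmt14_general Fq (Nat.odd_iff.mpr (by lia)) m hmdvd N
end
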